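/- arXiv:1205.0849 — 2 statements merged into one kernel-verified Lean document; each statement's English description precedes it below -/
import Mathlib

section
/- Let p ≥ √3 and let u be a global Schwartz solution of the defocusing generalized KdV equation ∂_t u + ∂_x^3 u = ∂_x(|u|^{p-1} u). Suppose u is soliton-like with decay, i.e., there exist a function x : ℝ → ℝ, constants C > 0 and ε > 0 such that for every R > 0, sup_{t ∈ ℝ} ∫_{|x − x(t)| > R} u²(t,x) dx ≤ C / R^{2+ε}. Then u ≡ 0. -/
open MeasureTheory Real

namespace GKdV

open Filter Topology

/-- partial derivative in space -/
noncomputable def dx (f : ℝ → ℝ → ℝ) : ℝ → ℝ → ℝ := fun t x => deriv (f t) x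
/-- partial derivative in time -/
noncomputable def dt (f : ℝ → ℝ → ℝ) : ℝ → ℝ → ℝ := fun t x => deriv (fun s => f s x) t
/-- joint smoothness -/
def Sm (f : ℝ → ℝ → ℝ) : Prop := ContDiff ℝ (⊤ : ℕ∞) (fun q : ℝ × ℝ => f q.1 q.2)
/-- joint continuity -/
def Cn (f : ℝ → ℝ → ℝ) : Prop := Continuous (fun q : ℝ × ℝ => f q.1 q.2)
/-- Schwartz at each time -/
def Sch (f : ℝ → ℝ → ℝ) : Prop := ∀ t : ℝ, ∃ F : SchwartzMap ℝ ℝ, ∀ x : ℝ, f t x = F x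

lemma Sm.cn {f} (h : Sm f) : Cn f := ContDiff.continuous h

lemma Sm.diff {f} (h : Sm f) : Differentiable ℝ (fun q : ℝ × ℝ => f q.1 q.2) :=
  ContDiff.differentiable h (by simp)

lemma Sm.hx' {f} (h : Sm f) (t x : ℝ) :
    HasDerivAt (f t) (fderiv ℝ (fun q : ℝ × ℝ => f q.1 q.2) (t, x) (0, 1)) x := by
  have h1 := (h.diff (t, x)).hasFDerivAt
  have h2 : HasDerivAt (fun y : ℝ => ((t, y) : ℝ × ℝ)) ((0 : ℝ), (1 : ℝ)) x :=
    (hasDerivAt_const x t).prodMk (hasDerivAt_id x)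
  exact h1.comp_hasDerivAt x h2

lemma Sm.ht' {f} (h : Sm f) (t x : ℝ) :
    HasDerivAt (fun s => f s x) (fderiv ℝ (fun q : ℝ × ℝ => f q.1 q.2) (t, x) (1, 0)) t := by
  have h1 := (h.diff (t, x)).hasFDerivAt
  have h2 : HasDerivAt (fun y : ℝ => ((y, x) : ℝ × ℝ)) ((1 : ℝ), (0 : ℝ)) t :=
    (hasDerivAt_id t).prodMk (hasDerivAt_const t x)
  exact h1.comp_hasDerivAt t h2

lemma Sm.dx_eq {f} (h : Sm f) (t x : ℝ) :
    dx f t x = fderiv ℝ (fun q : ℝ × ℝ => f q.1 q.2) (t, x) (0, 1) := (h.hx' t x).deriv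
lemma Sm.dt_eq {f} (h : Sm f) (t x : ℝ) :
    dt f t x = fderiv ℝ (fun q : ℝ × ℝ => f q.1 q.2) (t, x) (1, 0) := (h.ht' t x).deriv

lemma Sm.hx {f} (h : Sm f) (t x : ℝ) : HasDerivAt (f t) (dx f t x) x := by
  rw [h.dx_eq]; exact h.hx' t x
lemma Sm.ht {f} (h : Sm f) (t x : ℝ) : HasDerivAt (fun s => f s x) (dt f t x) t := by
  rw [h.dt_eq]; exact h.ht' t x

lemma Sm.fd {f} (h : Sm f) :
    ContDiff ℝ (⊤ : ℕ∞) (fderiv ℝ (fun q : ℝ × ℝ => f q.1 q.2)) :=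
  ContDiff.fderiv_right (m := (⊤ : ℕ∞)) h (by simp)

lemma Sm.dx {f} (h : Sm f) : Sm (dx f) := by
  have h1 : (fun q : ℝ × ℝ => GKdV.dx f q.1 q.2) =
      fun q => fderiv ℝ (fun q : ℝ × ℝ => f q.1 q.2) q (0, 1) := by
    funext q; exact h.dx_eq q.1 q.2
  unfold Sm; rw [h1]
  exact h.fd.clm_apply contDiff_const

lemma Sm.dt {f} (h : Sm f) : Sm (dt f) := by
  have h1 : (fun q : ℝ × ℝ => GKdV.dt f q.1 q.2) =
      fun q => fderiv ℝ (fun q : ℝ × ℝ => f q.1 q.2) q (1, 0) := by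
    funext q; exact h.dt_eq q.1 q.2
  unfold Sm; rw [h1]
  exact h.fd.clm_apply contDiff_const

lemma Sm.comm {f} (h : Sm f) (t x : ℝ) : GKdV.dt (GKdV.dx f) t x = GKdV.dx (GKdV.dt f) t x := by
  have hs : IsSymmSndFDerivAt ℝ (fun q : ℝ × ℝ => f q.1 q.2) (t, x) := by
    apply ContDiffAt.isSymmSndFDerivAt (n := (⊤ : ℕ∞)) (ContDiff.contDiffAt h)
    rw [minSmoothness_of_isRCLikeNormedField]
    exact WithTop.coe_le_coe.2 (le_top (a := (2 : ℕ∞)))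
  have hd : DifferentiableAt ℝ (fderiv ℝ (fun q : ℝ × ℝ => f q.1 q.2)) (t, x) :=
    (h.fd.differentiable (by simp)) _
  rw [h.dx.dt_eq, h.dt.dx_eq]
  have h1 : (fun q : ℝ × ℝ => GKdV.dx f q.1 q.2) =
      fun q => fderiv ℝ (fun q : ℝ × ℝ => f q.1 q.2) q (0, 1) := by
    funext q; exact h.dx_eq q.1 q.2
  have h2 : (fun q : ℝ × ℝ => GKdV.dt f q.1 q.2) =
      fun q => fderiv ℝ (fun q : ℝ × ℝ => f q.1 q.2) q (1, 0) := by
    funext q; exact h.dt_eq q.1 q.2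
  rw [h1, h2, fderiv_clm_apply hd (by fun_prop), fderiv_clm_apply hd (by fun_prop)]
  simpa using hs.eq (1, 0) (0, 1)

lemma Sch.dx {f} (h : Sch f) : Sch (dx f) := by
  intro t
  obtain ⟨F, hF⟩ := h t
  refine ⟨SchwartzMap.derivCLM ℝ ℝ F, fun x => ?_⟩
  have : f t = F := funext hF
  simp [GKdV.dx, this]

/-- polynomially bounded times Schwartz times bounded continuous is integrable -/
lemma Sch.int {f} (h : Sch f) (t : ℝ) (w : ℝ → ℝ) (hw : Continuous w) (C : ℝ) (k : ℕ)
    (hb : ∀ x, |w x| ≤ C * (1 + |x|) ^ k) : Integrable (fun x => w x * f t x) := by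
  obtain ⟨F, hF⟩ := h t
  have h1 : Integrable (fun x : ℝ => (1 + ‖x‖) ^ (k : ℕ) * ‖F x‖) := by
    have e : (fun x : ℝ => (1 + ‖x‖) ^ (k : ℕ) * ‖F x‖) =
        fun x => ∑ m ∈ Finset.range (k+1), ((k.choose m : ℝ) * (‖x‖ ^ m * ‖F x‖)) := by
      funext x
      rw [add_comm, add_pow, Finset.sum_mul]
      apply Finset.sum_congr rfl; intros; ring
    rw [e]
    apply integrable_finsetSum
    intro m _
    exact (SchwartzMap.integrable_pow_mul volume F m).const_mul _
  have e2 : (fun x => w x * f t x) = fun x => w x * F x := by funext x; rw [hF]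
  rw [e2]
  refine (h1.const_mul C).mono' (hw.mul F.continuous).aestronglyMeasurable ?_
  filter_upwards with x
  rw [norm_mul, ← mul_assoc]
  exact mul_le_mul_of_nonneg_right (hb x) (norm_nonneg _)

lemma Sch.bdd {f} (h : Sch f) (t : ℝ) : ∃ C, ∀ x, |f t x| ≤ C := by
  obtain ⟨F, hF⟩ := h t
  obtain ⟨C, hC⟩ := F.decay 0 0
  exact ⟨C, fun x => by simpa [hF] using hC.2 x⟩

lemma Cn.slice {f} (h : Cn f) (t : ℝ) : Continuous (f t) :=
  Continuous.comp (g := fun q : ℝ × ℝ => f q.1 q.2) h (Continuous.prodMk continuous_const continuous_id)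

lemma Sch.cont {f} (h : Sch f) (t : ℝ) : Continuous (f t) := by
  obtain ⟨F, hF⟩ := h t
  rw [show f t = F from funext hF]; exact F.continuous

/-- weight times product of two Schwartz slices is integrable -/
lemma Sch.int2 {f g} (h : Sch f) (hg : Sch g) (t : ℝ) (w : ℝ → ℝ) (hw : Continuous w) (C : ℝ)
    (k : ℕ) (hb : ∀ x, |w x| ≤ C * (1 + |x|) ^ k) :
    Integrable (fun x => w x * (f t x * g t x)) := by
  obtain ⟨D, hD⟩ := h.bdd t
  have := hg.int t (fun x => w x * f t x) (hw.mul (h.cont t)) (C * D) k (fun x => by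
    rw [abs_mul]
    have h0 : 0 ≤ D := (abs_nonneg _).trans (hD x)
    calc |w x| * |f t x| ≤ (C * (1 + |x|)^k) * D :=
          mul_le_mul (hb x) (hD x) (abs_nonneg _) ((abs_nonneg _).trans (hb x))
      _ = _ := by ring)
  simpa [mul_assoc] using this

end GKdV

namespace GKdV

open Filter Topology

/-- space-time measure on the slab -/
noncomputable def slab (a b : ℝ) : Measure (ℝ × ℝ) := (volume.restrict (Set.Ioc a b)).prod volume

lemma Cn.comp_x {φ : ℝ → ℝ} (h : Continuous φ) : Continuous (fun q : ℝ × ℝ => φ q.2) :=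
  h.comp continuous_snd

/-- a continuous function supported in a compact set of x is integrable on the slab -/
lemma slab_int_of_compact (a b : ℝ) (f : ℝ × ℝ → ℝ) (hf : Continuous f) (R : ℝ)
    (h0 : ∀ q : ℝ × ℝ, R < |q.2| → f q = 0) : Integrable f (slab a b) := by
  have hm : slab a b = (volume : Measure (ℝ × ℝ)).restrict (Set.Ioc a b ×ˢ Set.univ) := by
    unfold slab
    rw [Measure.volume_eq_prod, ← Measure.prod_restrict, Measure.restrict_univ]
  rw [hm]
  have h1 : IntegrableOn f (Set.Icc a b ×ˢ Set.Icc (-R) R) volume :=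
    hf.continuousOn.integrableOn_compact (isCompact_Icc.prod isCompact_Icc)
  have h2 : IntegrableOn f (Set.Ioc a b ×ˢ Set.univ) volume := by
    refine h1.of_forall_sdiff_eq_zero (measurableSet_Ioc.prod MeasurableSet.univ) ?_
    rintro ⟨t, x⟩ ⟨⟨h3, -⟩, h4⟩
    apply h0
    by_contra h5
    apply h4
    exact ⟨Set.Ioc_subset_Icc_self h3, abs_le.1 (not_lt.1 h5)⟩
  exact h2

/-- the compactly supported identity -/
lemma cpt_identity {ρ ρt j α β γ : ℝ → ℝ → ℝ} {a b : ℝ} (hab : a ≤ b)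
    (hρt : ∀ t x, HasDerivAt (fun s => ρ s x) (ρt t x) t)
    (cρ : Cn ρ) (cρt : Cn ρt) (cα : Cn α) (cβ : Cn β) (cγ : Cn γ)
    (hj : ∀ t x, HasDerivAt (j t) (ρt t x - γ t x) x)
    (hβ : ∀ t x, HasDerivAt (β t) (j t x + α t x) x)
    {φ φ' φ'' : ℝ → ℝ} (hφ : ∀ x, HasDerivAt φ (φ' x) x) (hφ' : ∀ x, HasDerivAt φ' (φ'' x) x)
    (cφ'' : Continuous φ'') (R : ℝ) (h0 : ∀ x, R < |x| → φ x = 0 ∧ φ' x = 0 ∧ φ'' x = 0) :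
    (∫ x, φ x * ρ b x) - (∫ x, φ x * ρ a x) =
      ∫ q, (φ' q.2 * α q.1 q.2 + φ'' q.2 * β q.1 q.2 + φ q.2 * γ q.1 q.2) ∂(slab a b) := by
  have cφ : Continuous φ := continuous_iff_continuousAt.2 fun x => (hφ x).continuousAt
  have cφ' : Continuous φ' := continuous_iff_continuousAt.2 fun x => (hφ' x).continuousAt
  have cint : ∀ f : ℝ → ℝ, Continuous f → (∀ x, R < |x| → f x = 0) → Integrable f := by
    intro f hf h
    apply hf.integrable_of_hasCompactSupport
    apply HasCompactSupport.intro (isCompact_Icc (a := -R) (b := R))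
    intro x hx
    apply h; by_contra h5; exact hx (abs_le.1 (not_lt.1 h5))
  have i1 : Integrable (fun q : ℝ × ℝ => φ q.2 * ρt q.1 q.2) (slab a b) :=
    slab_int_of_compact a b _ ((Cn.comp_x cφ).mul cρt) R
      (fun q hq => by simp [(h0 q.2 hq).1])
  have i2 : Integrable (fun q : ℝ × ℝ => φ' q.2 * α q.1 q.2 + φ'' q.2 * β q.1 q.2
      + φ q.2 * γ q.1 q.2) (slab a b) :=
    slab_int_of_compact a b _ ((((Cn.comp_x cφ').mul cα).add ((Cn.comp_x cφ'').mul cβ)).add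
      ((Cn.comp_x cφ).mul cγ)) R
      (fun q hq => by simp [(h0 q.2 hq).1, (h0 q.2 hq).2.1, (h0 q.2 hq).2.2])
  rw [← integral_sub (cint (fun x => φ x * ρ b x) (cφ.mul (cρ.slice b)) (fun x hx => by simp [(h0 x hx).1]))
    (cint (fun x => φ x * ρ a x) (cφ.mul (cρ.slice a)) (fun x hx => by simp [(h0 x hx).1]))]
  have e1 : ∀ x, φ x * ρ b x - φ x * ρ a x = ∫ τ in Set.Ioc a b, φ x * ρt τ x := by
    intro x
    rw [integral_const_mul, ← intervalIntegral.integral_of_le hab,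
      intervalIntegral.integral_eq_sub_of_hasDerivAt (fun t _ => hρt t x)]
    · ring
    · apply Continuous.intervalIntegrable
      exact Continuous.comp (g := fun q : ℝ × ℝ => ρt q.1 q.2) cρt
        (Continuous.prodMk continuous_id continuous_const)
  simp_rw [e1]
  unfold slab at i1 i2 ⊢
  rw [← integral_prod_symm (fun q : ℝ × ℝ => φ q.2 * ρt q.1 q.2) i1, integral_prod _ i1,
    integral_prod _ i2]
  congr 1
  funext τ
  simp only
  have cj : Continuous (j τ) := continuous_iff_continuousAt.2 fun x => (hj τ x).continuousAt
  have i3 : Integrable (fun x => φ x * ρt τ x) :=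
    cint _ (cφ.mul (cρt.slice τ)) (fun x hx => by simp [(h0 x hx).1])
  have i4 : Integrable (fun x => φ' x * α τ x + φ'' x * β τ x + φ x * γ τ x) :=
    cint _ (((cφ'.mul (cα.slice τ)).add (cφ''.mul (cβ.slice τ))).add (cφ.mul (cγ.slice τ)))
      (fun x hx => by simp [(h0 x hx).1, (h0 x hx).2.1, (h0 x hx).2.2])
  have hz := integral_eq_zero_of_hasDerivAt_of_integrable
    (f := fun x => φ x * j τ x - φ' x * β τ x)
    (f' := fun x => φ x * ρt τ x - (φ' x * α τ x + φ'' x * β τ x + φ x * γ τ x))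
    (fun x => by
      have := ((hφ x).mul (hj τ x)).sub ((hφ' x).mul (hβ τ x))
      exact this.congr_deriv (by ring)) (i3.sub i4)
      (cint _ ((cφ.mul cj).sub (cφ'.mul (cβ.slice τ)))
        (fun x hx => by simp [(h0 x hx).1, (h0 x hx).2.1]))
  rw [integral_sub i3 i4] at hz
  linarith

/-- cutoff function with two derivatives -/
lemma exists_cutoff : ∃ (χ χ' χ'' : ℝ → ℝ) (C : ℝ), 0 ≤ C ∧
    (∀ x, HasDerivAt χ (χ' x) x) ∧ (∀ x, HasDerivAt χ' (χ'' x) x) ∧ Continuous χ'' ∧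
    (∀ x, |χ x| ≤ 1) ∧ (∀ x, |χ' x| ≤ C) ∧ (∀ x, |χ'' x| ≤ C) ∧
    (∀ x, 2 < |x| → χ x = 0 ∧ χ' x = 0 ∧ χ'' x = 0) ∧
    (∀ x, |x| < 1 → χ x = 1 ∧ χ' x = 0 ∧ χ'' x = 0) := by
  let χ : ContDiffBump (0 : ℝ) := ⟨1, 2, by norm_num, by norm_num⟩
  have hs : ContDiff ℝ 2 (χ : ℝ → ℝ) := χ.contDiff
  have hs1 : ContDiff ℝ 1 (deriv (χ : ℝ → ℝ)) := by
    have : ContDiff ℝ (1+1) (χ : ℝ → ℝ) := hs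
    exact (contDiff_succ_iff_deriv.1 this).2.2
  have hs2 : Continuous (deriv (deriv (χ : ℝ → ℝ))) := hs1.continuous_deriv le_rfl
  have cs : HasCompactSupport (χ : ℝ → ℝ) := χ.hasCompactSupport
  obtain ⟨C1, hC1⟩ := cs.deriv.exists_bound_of_continuous hs1.continuous
  obtain ⟨C2, hC2⟩ := cs.deriv.deriv.exists_bound_of_continuous hs2
  have hC1' : 0 ≤ C1 := (norm_nonneg _).trans (hC1 0)
  refine ⟨χ, deriv χ, deriv (deriv χ), max C1 C2, le_max_of_le_left hC1', fun x =>
    (hs.differentiable (by norm_num) x).hasDerivAt,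
    fun x => (hs1.differentiable (by norm_num) x).hasDerivAt, hs2, ?_,
    fun x => (hC1 x).trans (le_max_left _ _), fun x => (hC2 x).trans (le_max_right _ _), ?_, ?_⟩
  · intro x; rw [abs_of_nonneg χ.nonneg]; exact χ.le_one
  · intro x hx
    have e : (χ : ℝ → ℝ) =ᶠ[𝓝 x] fun _ => 0 := by
      have : ∀ᶠ y in 𝓝 x, 2 < |y| := (continuous_abs.tendsto x).eventually (lt_mem_nhds hx)
      filter_upwards [this] with y hy
      apply χ.zero_of_le_dist
      simpa [χ] using hy.le
    have e1 := e.deriv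
    have e2 := e1.deriv
    refine ⟨e.eq_of_nhds, ?_, ?_⟩
    · simpa using e1.eq_of_nhds
    · simpa using e2.eq_of_nhds
  · intro x hx
    have e : (χ : ℝ → ℝ) =ᶠ[𝓝 x] fun _ => 1 := by
      have : ∀ᶠ y in 𝓝 x, |y| < 1 := (continuous_abs.tendsto x).eventually (gt_mem_nhds hx)
      filter_upwards [this] with y hy
      apply χ.one_of_mem_closedBall
      simpa [χ] using hy.le
    have e1 := e.deriv
    have e2 := e1.deriv
    refine ⟨e.eq_of_nhds, ?_, ?_⟩
    · simpa using e1.eq_of_nhds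
    · simpa using e2.eq_of_nhds

end GKdV

namespace GKdV

open Filter Topology

lemma exists_cutoff_seq : ∃ (c c1 c2 : ℕ → ℝ → ℝ) (C : ℝ), 0 ≤ C ∧
    (∀ n x, HasDerivAt (c n) (c1 n x) x) ∧ (∀ n x, HasDerivAt (c1 n) (c2 n x) x) ∧
    (∀ n, Continuous (c2 n)) ∧
    (∀ n x, |c n x| ≤ 1) ∧ (∀ n x, (1 + |x|) * |c1 n x| ≤ C) ∧ (∀ n x, (1 + |x|) * |c2 n x| ≤ C) ∧
    (∀ (n : ℕ) x, 2 * (n + 1 : ℝ) < |x| → c n x = 0 ∧ c1 n x = 0 ∧ c2 n x = 0) ∧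
    (∀ x, ∀ᶠ n in atTop, c n x = 1 ∧ c1 n x = 0 ∧ c2 n x = 0) := by
  obtain ⟨χ, χ', χ'', C, hC, h1, h2, h3, b0, b1, b2, z, o⟩ := exists_cutoff
  have hR : ∀ n : ℕ, (0 : ℝ) < n + 1 := fun n => by positivity
  have hd : ∀ (n : ℕ) (x : ℝ), HasDerivAt (fun y : ℝ => y / (n + 1)) (1 / (n + 1 : ℝ)) x :=
    fun n x => (hasDerivAt_id x).div_const _
  have hab : ∀ (n : ℕ) (x : ℝ), |x / (n + 1)| = |x| / (n + 1) := fun n x => by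
    rw [abs_div, abs_of_pos (hR n)]
  have hz : ∀ (n : ℕ) (x : ℝ), 2 * (n + 1 : ℝ) < |x| → 2 < |x / (n + 1)| := fun n x hx => by
    rw [hab, lt_div_iff₀ (hR n)]; exact hx
  have key : ∀ (n : ℕ) (x : ℝ) (f : ℝ → ℝ), (∀ x, |f x| ≤ C) → (∀ x, 2 < |x| → f x = 0) →
      (1 + |x|) * (|f (x / (n + 1))| * (1 / (n + 1 : ℝ))) ≤ 3 * C := by
    intro n x f hf hf0
    by_cases hx : 2 * (n + 1 : ℝ) < |x|
    · rw [hf0 _ (hz n x hx)]; simp; exact hC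
    · have h4 : 1 + |x| ≤ 3 * (n + 1 : ℝ) := by
        have : (0:ℝ) ≤ n := by positivity
        linarith
      calc (1 + |x|) * (|f (x / (n + 1))| * (1 / (n + 1 : ℝ)))
          ≤ (3 * (n + 1 : ℝ)) * (C * (1 / (n + 1 : ℝ))) := by
            have := hf (x / (n+1)); gcongr
        _ = 3 * C := by have := (hR n).ne'; field_simp
  refine ⟨fun n x => χ (x / (n + 1)), fun n x => χ' (x / (n + 1)) * (1 / (n + 1)),
    fun n x => χ'' (x / (n + 1)) * (1 / (n + 1)) * (1 / (n + 1)), 3 * C, by positivity,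
    fun n x => (h1 _).comp x (hd n x), fun n x => ((h2 _).comp x (hd n x)).mul_const _,
    fun n => by fun_prop, fun n x => b0 _, ?_, ?_, ?_, ?_⟩
  · intro n x
    rw [abs_mul, abs_of_pos (a := 1 / (n + 1 : ℝ)) (by positivity)]
    exact key n x χ' b1 (fun x hx => (z x hx).2.1)
  · intro n x
    rw [abs_mul, abs_mul, abs_of_pos (a := 1 / (n + 1 : ℝ)) (by positivity)]
    refine le_trans ?_ (key n x χ'' b2 (fun x hx => (z x hx).2.2))
    gcongr
    apply mul_le_of_le_one_right (by positivity)
    rw [div_le_one (hR n)]; have : (0:ℝ) ≤ n := by positivity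
    linarith
  · intro n x hx
    obtain ⟨e1, e2, e3⟩ := z _ (hz n x hx)
    simp [e1, e2, e3]
  · intro x
    filter_upwards [eventually_ge_atTop ⌈|x|⌉₊] with n hn
    have h5 : |x / (n + 1)| < 1 := by
      rw [hab, div_lt_one (hR n)]
      have := Nat.ceil_le.1 hn
      linarith
    obtain ⟨e1, e2, e3⟩ := o _ h5
    simp [e1, e2, e3]

theorem ext_identity {ρ ρt j α β γ : ℝ → ℝ → ℝ} {a b : ℝ} (hab : a ≤ b)
    (hρt : ∀ t x, HasDerivAt (fun s => ρ s x) (ρt t x) t)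
    (cρ : Cn ρ) (cρt : Cn ρt) (cα : Cn α) (cβ : Cn β) (cγ : Cn γ)
    (hj : ∀ t x, HasDerivAt (j t) (ρt t x - γ t x) x)
    (hβ : ∀ t x, HasDerivAt (β t) (j t x + α t x) x)
    {φ φ' φ'' : ℝ → ℝ} (hφ : ∀ x, HasDerivAt φ (φ' x) x) (hφ' : ∀ x, HasDerivAt φ' (φ'' x) x)
    (cφ'' : Continuous φ'') (W : ℝ → ℝ) (K : ℝ)
    (b0 : ∀ x, |φ x| ≤ K * (1 + |x|) * W x) (b1 : ∀ x, |φ' x| ≤ K * W x)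
    (b2 : ∀ x, |φ'' x| ≤ K * W x)
    (iα : Integrable (fun q : ℝ × ℝ => W q.2 * α q.1 q.2) (slab a b))
    (iβ : Integrable (fun q : ℝ × ℝ => W q.2 * β q.1 q.2) (slab a b))
    (iγ : Integrable (fun q : ℝ × ℝ => φ q.2 * γ q.1 q.2) (slab a b))
    (ia : Integrable (fun x => φ x * ρ a x)) (ib : Integrable (fun x => φ x * ρ b x)) :
    (∫ x, φ x * ρ b x) - (∫ x, φ x * ρ a x) =
      ∫ q, (φ' q.2 * α q.1 q.2 + φ'' q.2 * β q.1 q.2 + φ q.2 * γ q.1 q.2) ∂(slab a b) := by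
  obtain ⟨c, c1, c2, C, hC, d1, d2, cc2, e0, e1, e2, z, o⟩ := exists_cutoff_seq
  have cφ : Continuous φ := continuous_iff_continuousAt.2 fun x => (hφ x).continuousAt
  have cφ' : Continuous φ' := continuous_iff_continuousAt.2 fun x => (hφ' x).continuousAt
  have cc : ∀ n, Continuous (c n) := fun n =>
    continuous_iff_continuousAt.2 fun x => (d1 n x).continuousAt
  have cc1 : ∀ n, Continuous (c1 n) := fun n =>
    continuous_iff_continuousAt.2 fun x => (d2 n x).continuousAt
  have hW : ∀ x, 0 ≤ K * W x := fun x => (abs_nonneg _).trans (b1 x)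
  have main : ∀ n, (∫ x, (φ x * c n x) * ρ b x) - (∫ x, (φ x * c n x) * ρ a x) =
      ∫ q, ((φ' q.2 * c n q.2 + φ q.2 * c1 n q.2) * α q.1 q.2 +
        ((φ'' q.2 * c n q.2 + φ' q.2 * c1 n q.2) + (φ' q.2 * c1 n q.2 + φ q.2 * c2 n q.2))
          * β q.1 q.2 + (φ q.2 * c n q.2) * γ q.1 q.2) ∂(slab a b) := by
    intro n
    refine cpt_identity (φ := fun x => φ x * c n x) (φ' := fun x => φ' x * c n x + φ x * c1 n x)
      (φ'' := fun x => (φ'' x * c n x + φ' x * c1 n x) + (φ' x * c1 n x + φ x * c2 n x))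
      hab hρt cρ cρt cα cβ cγ hj hβ (fun x => (hφ x).mul (d1 n x))
      (fun x => ((hφ' x).mul (d1 n x)).add ((hφ x).mul (d2 n x))) ?_ (2 * (n + 1)) ?_
    · have := cc n; have := cc1 n; have := cc2 n; fun_prop
    · intro x hx
      obtain ⟨z1, z2, z3⟩ := z n x hx
      simp [z1, z2, z3]
  have lim : ∀ t, Cn ρ → Integrable (fun x => φ x * ρ t x) →
      Tendsto (fun n => ∫ x, (φ x * c n x) * ρ t x) atTop (𝓝 (∫ x, φ x * ρ t x)) := by
    intro t cr hi
    refine tendsto_integral_of_dominated_convergence (fun x => |φ x * ρ t x|) ?_ hi.abs ?_ ?_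
    · intro n; exact ((cφ.mul (cc n)).mul (cr.slice t)).aestronglyMeasurable
    · intro n; filter_upwards with x
      rw [Real.norm_eq_abs, mul_right_comm, abs_mul _ (c n x)]
      exact mul_le_of_le_one_right (abs_nonneg _) (e0 n x)
    · filter_upwards with x
      refine tendsto_const_nhds.congr' ?_
      filter_upwards [o x] with n hn
      simp [hn.1]
  have lim2 : Tendsto (fun n : ℕ =>
      ∫ q, ((φ' q.2 * c n q.2 + φ q.2 * c1 n q.2) * α q.1 q.2 +
        ((φ'' q.2 * c n q.2 + φ' q.2 * c1 n q.2) + (φ' q.2 * c1 n q.2 + φ q.2 * c2 n q.2))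
          * β q.1 q.2 + (φ q.2 * c n q.2) * γ q.1 q.2) ∂(slab a b)) atTop
      (𝓝 (∫ q, (φ' q.2 * α q.1 q.2 + φ'' q.2 * β q.1 q.2 + φ q.2 * γ q.1 q.2) ∂(slab a b))) := by
    refine tendsto_integral_of_dominated_convergence
      (fun q => (|K| * (1 + C)) * |W q.2 * α q.1 q.2| + (|K| * (1 + C + C + C)) * |W q.2 * β q.1 q.2|
        + |φ q.2 * γ q.1 q.2|) ?_ ?_ ?_ ?_
    · intro n
      have c0 := Cn.comp_x (cc n)
      have c01 := Cn.comp_x (cc1 n)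
      have c02 := Cn.comp_x (cc2 n)
      have f0 := Cn.comp_x cφ
      have f1 := Cn.comp_x cφ'
      have f2 := Cn.comp_x cφ''
      exact (((((f1.mul c0).add (f0.mul c01)).mul cα).add ((((f2.mul c0).add (f1.mul c01)).add
        ((f1.mul c01).add (f0.mul c02))).mul cβ)).add ((f0.mul c0).mul cγ)).aestronglyMeasurable
    · exact ((iα.abs.const_mul _).add (iβ.abs.const_mul _)).add iγ.abs
    · intro n; filter_upwards with q
      obtain ⟨t, x⟩ := q
      simp only
      have h1x : 1 ≤ 1 + |x| := by linarith [abs_nonneg x]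
      have k1 : |c1 n x| ≤ C := le_trans (by nlinarith [abs_nonneg (c1 n x)]) (e1 n x)
      have g0 : |φ' x * c n x| ≤ K * W x := by
        rw [abs_mul]; exact (mul_le_of_le_one_right (abs_nonneg _) (e0 n x)).trans (b1 x)
      have g1 : |φ'' x * c n x| ≤ K * W x := by
        rw [abs_mul]; exact (mul_le_of_le_one_right (abs_nonneg _) (e0 n x)).trans (b2 x)
      have g2 : |φ' x * c1 n x| ≤ K * W x * C := by
        rw [abs_mul]; exact mul_le_mul (b1 x) k1 (abs_nonneg _) (hW x)
      have g3 : |φ x * c1 n x| ≤ K * W x * C := by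
        rw [abs_mul]
        calc |φ x| * |c1 n x| ≤ (K * (1 + |x|) * W x) * |c1 n x| := by
              gcongr; exact b0 x
          _ = K * W x * ((1 + |x|) * |c1 n x|) := by ring
          _ ≤ _ := mul_le_mul_of_nonneg_left (e1 n x) (hW x)
      have g4 : |φ x * c2 n x| ≤ K * W x * C := by
        rw [abs_mul]
        calc |φ x| * |c2 n x| ≤ (K * (1 + |x|) * W x) * |c2 n x| := by
              gcongr; exact b0 x
          _ = K * W x * ((1 + |x|) * |c2 n x|) := by ring
          _ ≤ _ := mul_le_mul_of_nonneg_left (e2 n x) (hW x)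
      have hKW : K * W x = |K| * |W x| := by rw [← abs_mul, abs_of_nonneg (hW x)]
      rw [Real.norm_eq_abs]
      refine (abs_add_le _ _).trans (add_le_add ((abs_add_le _ _).trans (add_le_add ?_ ?_)) ?_)
      · rw [abs_mul, abs_mul (W x)]
        calc _ ≤ (K * W x + K * W x * C) * |α t x| := by
              gcongr; exact (abs_add_le _ _).trans (add_le_add g0 g3)
          _ = _ := by rw [hKW]; ring
      · rw [abs_mul, abs_mul (W x)]
        calc _ ≤ ((K * W x + K * W x * C) + (K * W x * C + K * W x * C)) * |β t x| := by
              gcongr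
              exact (abs_add_le _ _).trans (add_le_add ((abs_add_le _ _).trans (add_le_add g1 g2))
                ((abs_add_le _ _).trans (add_le_add g2 g4)))
          _ = _ := by rw [hKW]; ring
      · rw [mul_right_comm, abs_mul _ (c n x)]
        exact mul_le_of_le_one_right (abs_nonneg _) (e0 n x)
    · filter_upwards with q
      refine tendsto_const_nhds.congr' ?_
      filter_upwards [o q.2] with n hn
      simp [hn.1, hn.2.1, hn.2.2]
  have l1 := (lim b cρ ib).sub (lim a cρ ia)
  refine tendsto_nhds_unique l1 ?_
  simp_rw [main]
  exact lim2

/-- integrability on the slab from a uniform bound on slices -/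
lemma slab_int {f : ℝ → ℝ → ℝ} (hf : Cn f) (h0 : ∀ t x, 0 ≤ f t x) {a b N : ℝ}
    (hi : ∀ t ∈ Set.Icc a b, Integrable (f t)) (hN : ∀ t ∈ Set.Icc a b, ∫ x, f t x ≤ N) :
    Integrable (fun q : ℝ × ℝ => f q.1 q.2) (slab a b) := by
  have hs : AEStronglyMeasurable (fun q : ℝ × ℝ => f q.1 q.2) (slab a b) :=
    Continuous.aestronglyMeasurable hf
  have hae : ∀ᵐ t ∂(volume.restrict (Set.Ioc a b)), t ∈ Set.Icc a b := by
    filter_upwards [ae_restrict_mem measurableSet_Ioc] with t ht using Set.Ioc_subset_Icc_self ht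
  unfold slab at hs ⊢
  rw [integrable_prod_iff hs]
  refine ⟨?_, ?_⟩
  · filter_upwards [hae] with t ht using hi t ht
  · refine Integrable.mono' (integrable_const (|N|)) hs.norm.integral_prod_right' ?_
    filter_upwards [hae] with t ht
    simp only [Real.norm_eq_abs, abs_of_nonneg (h0 _ _)]
    rw [abs_of_nonneg (integral_nonneg (h0 t))]
    exact (hN t ht).trans (le_abs_self N)

/-- Fatou: uniformly bounded integrals of nonnegative continuous functions converging pointwise -/
lemma fatou_int {X : Type*} [MeasurableSpace X] {μ : Measure X} {f : ℕ → X → ℝ} {g : X → ℝ}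
    (hi : ∀ n, Integrable (f n) μ) (h0 : ∀ n x, 0 ≤ f n x) (N : ℝ) (hN : ∀ n, ∫ x, f n x ∂μ ≤ N)
    (hlim : ∀ x, Tendsto (fun n => f n x) atTop (𝓝 (g x))) : Integrable g μ := by
  have hm : AEStronglyMeasurable g μ :=
    aestronglyMeasurable_of_tendsto_ae atTop (fun n => (hi n).1) (Eventually.of_forall hlim)
  refine ⟨hm, ?_⟩
  have hb : ∫⁻ x, ‖g x‖ₑ ∂μ ≤ ENNReal.ofReal N := by
    calc ∫⁻ x, ‖g x‖ₑ ∂μ = ∫⁻ x, liminf (fun n => ‖f n x‖ₑ) atTop ∂μ := by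
          apply lintegral_congr; intro x
          exact ((hlim x).enorm.liminf_eq).symm
      _ ≤ liminf (fun n => ∫⁻ x, ‖f n x‖ₑ ∂μ) atTop :=
          lintegral_liminf_le' (fun n => (hi n).1.enorm)
      _ ≤ ENNReal.ofReal N := by
          refine liminf_le_of_le (by isBoundedDefault) ?_
          intro B hB
          obtain ⟨n, hn⟩ := hB.exists
          refine hn.trans ?_
          rw [← ofReal_integral_norm_eq_lintegral_enorm (hi n)]
          apply ENNReal.ofReal_le_ofReal
          simpa [Real.norm_eq_abs, abs_of_nonneg (h0 n _)] using hN n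
  exact hb.trans_lt ENNReal.ofReal_lt_top

end GKdV

namespace GKdV

open Filter Topology

/-- the nonlinearity -/
noncomputable def nl (p y : ℝ) : ℝ := |y| ^ (p - 1) * y
/-- the power `|y|^(p+1)` -/
noncomputable def pw (p y : ℝ) : ℝ := |y| ^ (p + 1)

lemma pw_nonneg (p y : ℝ) : 0 ≤ pw p y := Real.rpow_nonneg (abs_nonneg _) _

lemma mul_nl {p : ℝ} (hp : 1 < p) (y : ℝ) : y * nl p y = pw p y := by
  unfold nl pw
  rcases eq_or_ne y 0 with rfl | hy
  · simp [Real.zero_rpow (by linarith : p + 1 ≠ 0)]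
  · have : |y| ^ (p + 1) = |y| ^ (p - 1) * |y| ^ (2 : ℝ) := by
      rw [← Real.rpow_add (abs_pos.2 hy)]; congr 1; ring
    rw [this, Real.rpow_two, sq_abs]; ring

lemma pw_eq {p : ℝ} (hp : 1 < p) (y : ℝ) : pw p y = |y| ^ (p - 1) * y ^ 2 := by
  rw [← mul_nl hp]; unfold nl; ring

lemma hasDerivAt_pw {p : ℝ} (hp : 1 < p) (y : ℝ) :
    HasDerivAt (pw p) ((p + 1) * nl p y) y := by
  have := hasDerivAt_abs_rpow y (p := p + 1) (by linarith)
  unfold pw nl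
  refine this.congr_deriv ?_
  rw [show p + 1 - 2 = p - 1 by ring]; ring

lemma hasDerivAt_nl {p : ℝ} (hp : 1 < p) (y : ℝ) :
    HasDerivAt (nl p) (p * |y| ^ (p - 1)) y := by
  rcases eq_or_ne y 0 with rfl | hy
  · rw [hasDerivAt_iff_tendsto_slope]
    have e : ∀ z ∈ ({0}ᶜ : Set ℝ), slope (nl p) 0 z = |z| ^ (p - 1) := by
      intro z hz
      have hz' : z ≠ 0 := hz
      simp [slope_def_field, nl, hz']
    have hc : Continuous fun z : ℝ => |z| ^ (p - 1) :=
      continuous_abs.rpow_const (fun _ => Or.inr (by linarith))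
    have ht := (hc.tendsto 0).mono_left (nhdsWithin_le_nhds (s := ({0}ᶜ : Set ℝ)))
    have h0 : |(0:ℝ)| ^ (p - 1) = 0 := by simp [Real.zero_rpow (by linarith : p - 1 ≠ 0)]
    rw [h0] at ht ⊢
    rw [mul_zero]
    exact ht.congr' (by filter_upwards [self_mem_nhdsWithin] with z hz using (e z hz).symm)
  · have h1 : HasDerivAt (fun z => pw p z / z) (((p + 1) * nl p y * y - pw p y * 1) / y ^ 2) y :=
      (hasDerivAt_pw hp y).div (hasDerivAt_id y) hy
    have h2 : nl p =ᶠ[𝓝 y] fun z => pw p z / z := by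
      filter_upwards [isOpen_ne.mem_nhds hy] with z hz
      rw [← mul_nl hp]; field_simp
    refine (h1.congr_of_eventuallyEq h2).congr_deriv ?_
    rw [← mul_nl hp]; unfold nl; field_simp; ring

lemma continuous_nl {p : ℝ} (hp : 1 < p) : Continuous (nl p) :=
  continuous_iff_continuousAt.2 fun x => (hasDerivAt_nl hp x).continuousAt
lemma continuous_pw {p : ℝ} (hp : 1 < p) : Continuous (pw p) :=
  continuous_iff_continuousAt.2 fun x => (hasDerivAt_pw hp x).continuousAt

/-- the solution hypotheses -/
structure Sol (p : ℝ) (u : ℝ → ℝ → ℝ) : Prop where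
  hp : 1 < p
  sm : Sm u
  sch : Sch u
  pde : ∀ t x, dt u t x + dx (dx (dx u)) t x = p * |u t x| ^ (p - 1) * dx u t x

lemma Sol.cnl {p u} (h : Sol p u) : Cn (fun t x => nl p (u t x)) :=
  (continuous_nl h.hp).comp h.sm.cn
lemma Sol.cpw {p u} (h : Sol p u) : Cn (fun t x => pw p (u t x)) :=
  (continuous_pw h.hp).comp h.sm.cn

lemma Sol.hnl {p u} (h : Sol p u) (t x : ℝ) :
    HasDerivAt (fun y => nl p (u t y)) (p * |u t x| ^ (p - 1) * dx u t x) x :=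
  (hasDerivAt_nl h.hp (u t x)).comp x (h.sm.hx t x)
lemma Sol.hpw {p u} (h : Sol p u) (t x : ℝ) :
    HasDerivAt (fun y => pw p (u t y)) ((p + 1) * nl p (u t x) * dx u t x) x :=
  (hasDerivAt_pw h.hp (u t x)).comp x (h.sm.hx t x)
lemma Sol.hpw_t {p u} (h : Sol p u) (t x : ℝ) :
    HasDerivAt (fun s => pw p (u s x)) ((p + 1) * nl p (u t x) * dt u t x) t :=
  HasDerivAt.comp (h₂ := pw p) (h := fun s => u s x) t (hasDerivAt_pw h.hp (u t x)) (h.sm.ht t x)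

lemma Cn.mul {f g : ℝ → ℝ → ℝ} (hf : Cn f) (hg : Cn g) : Cn (fun t x => f t x * g t x) :=
  Continuous.mul hf hg
lemma Cn.add {f g : ℝ → ℝ → ℝ} (hf : Cn f) (hg : Cn g) : Cn (fun t x => f t x + g t x) :=
  Continuous.add hf hg
lemma Cn.sub {f g : ℝ → ℝ → ℝ} (hf : Cn f) (hg : Cn g) : Cn (fun t x => f t x - g t x) :=
  Continuous.sub hf hg
lemma Cn.cmul {f : ℝ → ℝ → ℝ} (c : ℝ) (hf : Cn f) : Cn (fun t x => c * f t x) :=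
  Continuous.mul continuous_const hf
lemma Cn.sq {f : ℝ → ℝ → ℝ} (hf : Cn f) : Cn (fun t x => f t x ^ 2) :=
  Continuous.pow hf 2

/-- mass flux -/
noncomputable def mα (p : ℝ) (u : ℝ → ℝ → ℝ) (t x : ℝ) : ℝ :=
  -(3 * dx u t x ^ 2 + 2 * p / (p + 1) * pw p (u t x))
noncomputable def mβ (u : ℝ → ℝ → ℝ) (t x : ℝ) : ℝ := -2 * (u t x * dx u t x)

/-- energy density -/
noncomputable def en (p : ℝ) (u : ℝ → ℝ → ℝ) (t x : ℝ) : ℝ :=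
  1 / 2 * dx u t x ^ 2 + 1 / (p + 1) * pw p (u t x)
/-- energy flux -/
noncomputable def eα (p : ℝ) (u : ℝ → ℝ → ℝ) (t x : ℝ) : ℝ :=
  2 * (dx (dx u) t x * nl p (u t x)) - (3 / 2 * dx (dx u) t x ^ 2 + 1 / 2 * nl p (u t x) ^ 2)
noncomputable def eβ (p : ℝ) (u : ℝ → ℝ → ℝ) (t x : ℝ) : ℝ :=
  dx u t x * (nl p (u t x) - dx (dx u) t x)

lemma Sol.cmα {p u} (h : Sol p u) : Cn (mα p u) := by
  have := ((h.sm.dx.cn.sq.cmul 3).add (h.cpw.cmul (2 * p / (p + 1)))).cmul (-1)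
  unfold mα; simpa [Cn] using this
lemma Sol.cmβ {p u} (h : Sol p u) : Cn (mβ u) := (h.sm.cn.mul h.sm.dx.cn).cmul (-2)
lemma Sol.cen {p u} (h : Sol p u) : Cn (en p u) :=
  (h.sm.dx.cn.sq.cmul (1 / 2)).add (h.cpw.cmul (1 / (p + 1)))
lemma Sol.ceα {p u} (h : Sol p u) : Cn (eα p u) :=
  ((h.sm.dx.dx.cn.mul h.cnl).cmul 2).sub ((h.sm.dx.dx.cn.sq.cmul (3 / 2)).add
    (h.cnl.sq.cmul (1 / 2)))
lemma Sol.ceβ {p u} (h : Sol p u) : Cn (eβ p u) := h.sm.dx.cn.mul (h.cnl.sub h.sm.dx.dx.cn)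

/-- general mass identity for a smooth function with a forcing in divergence form -/
theorem mass_general {v g gx : ℝ → ℝ → ℝ} (hv : Sm v) (cg : Cn g)
    (hg : ∀ t x, HasDerivAt (g t) (gx t x) x)
    (pde : ∀ t x, dt v t x + dx (dx (dx v)) t x = gx t x) {a b : ℝ} (hab : a ≤ b)
    (iα : Integrable (fun q : ℝ × ℝ => -(3 * dx v q.1 q.2 ^ 2 + 2 * (v q.1 q.2 * g q.1 q.2)))
      (slab a b))
    (iβ : Integrable (fun q : ℝ × ℝ => -2 * (v q.1 q.2 * dx v q.1 q.2)) (slab a b))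
    (iγ : Integrable (fun q : ℝ × ℝ => q.2 * (-2 * (dx v q.1 q.2 * g q.1 q.2))) (slab a b))
    (ia : Integrable (fun x => x * v a x ^ 2)) (ib : Integrable (fun x => x * v b x ^ 2)) :
    (∫ x, x * v b x ^ 2) - (∫ x, x * v a x ^ 2) =
      ∫ q : ℝ × ℝ, (-(3 * dx v q.1 q.2 ^ 2 + 2 * (v q.1 q.2 * g q.1 q.2)) +
        q.2 * (-2 * (dx v q.1 q.2 * g q.1 q.2))) ∂(slab a b) := by
  have key := ext_identity (ρ := fun t x => v t x ^ 2) (ρt := fun t x => 2 * (v t x * dt v t x))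
    (j := fun t x => dx v t x ^ 2 - 2 * (v t x * dx (dx v) t x) + 2 * (v t x * g t x))
    (α := fun t x => -(3 * dx v t x ^ 2 + 2 * (v t x * g t x)))
    (β := fun t x => -2 * (v t x * dx v t x)) (γ := fun t x => -2 * (dx v t x * g t x))
    (φ := fun x => x) (φ' := fun _ => 1) (φ'' := fun _ => 0) (W := fun _ => 1) (K := 1)
    hab (fun t x => ((hv.ht t x).pow 2).congr_deriv (by push_cast; ring)) hv.cn.sq
    ((hv.cn.mul hv.dt.cn).cmul 2)
    (by have := ((hv.dx.cn.sq.cmul 3).add ((hv.cn.mul cg).cmul 2)).cmul (-1)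
        simpa [Cn] using this)
    ((hv.cn.mul hv.dx.cn).cmul (-2)) ((hv.dx.cn.mul cg).cmul (-2))
    (fun t x => ((((hv.dx.hx t x).pow 2).sub (((hv.hx t x).mul (hv.dx.dx.hx t x)).const_mul 2)).add
      (((hv.hx t x).mul (hg t x)).const_mul 2)).congr_deriv (by
        rw [← pde t x]; push_cast; ring))
    (fun t x => (((hv.hx t x).mul (hv.dx.hx t x)).const_mul (-2)).congr_deriv (by ring))
    (fun x => hasDerivAt_id x) (fun x => hasDerivAt_const x 1) continuous_const
    (fun x => by simp) (fun x => by simp) (fun x => by simp)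
    (by simpa using iα) (by simpa using iβ) iγ ia ib
  simpa using key

/-- mass identity for the solution -/
theorem Sol.mass {p u} (h : Sol p u) {a b : ℝ} (hab : a ≤ b)
    {φ φ' φ'' : ℝ → ℝ} (hφ : ∀ x, HasDerivAt φ (φ' x) x) (hφ' : ∀ x, HasDerivAt φ' (φ'' x) x)
    (cφ'' : Continuous φ'') (W : ℝ → ℝ) (K : ℝ)
    (b0 : ∀ x, |φ x| ≤ K * (1 + |x|) * W x) (b1 : ∀ x, |φ' x| ≤ K * W x)
    (b2 : ∀ x, |φ'' x| ≤ K * W x)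
    (iα : Integrable (fun q : ℝ × ℝ => W q.2 * mα p u q.1 q.2) (slab a b))
    (iβ : Integrable (fun q : ℝ × ℝ => W q.2 * mβ u q.1 q.2) (slab a b))
    (ia : Integrable (fun x => φ x * u a x ^ 2)) (ib : Integrable (fun x => φ x * u b x ^ 2)) :
    (∫ x, φ x * u b x ^ 2) - (∫ x, φ x * u a x ^ 2) =
      ∫ q, (φ' q.2 * mα p u q.1 q.2 + φ'' q.2 * mβ u q.1 q.2) ∂(slab a b) := by
  have hp1 : p + 1 ≠ 0 := by have := h.hp; linarith
  have hv := h.sm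
  have key := ext_identity (ρ := fun t x => u t x ^ 2) (ρt := fun t x => 2 * (u t x * dt u t x))
    (j := fun t x => dx u t x ^ 2 - 2 * (u t x * dx (dx u) t x) + 2 * p / (p + 1) * pw p (u t x))
    (α := mα p u) (β := mβ u) (γ := fun _ _ => 0)
    hab (fun t x => ((hv.ht t x).pow 2).congr_deriv (by push_cast; ring)) hv.cn.sq
    ((hv.cn.mul hv.dt.cn).cmul 2) h.cmα h.cmβ continuous_const
    (fun t x => ((((hv.dx.hx t x).pow 2).sub (((hv.hx t x).mul (hv.dx.dx.hx t x)).const_mul 2)).add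
      ((h.hpw t x).const_mul (2 * p / (p + 1)))).congr_deriv (by
        have e : dt u t x = p * |u t x| ^ (p - 1) * dx u t x - dx (dx (dx u)) t x := by
          rw [← h.pde t x]; ring
        rw [e]; unfold nl; field_simp; push_cast; ring))
    (fun t x => (((hv.hx t x).mul (hv.dx.hx t x)).const_mul (-2)).congr_deriv (by
      unfold mα; ring))
    hφ hφ' cφ'' W K b0 b1 b2 iα iβ (by simp) ia ib
  simpa using key

/-- energy identity for the solution -/
theorem Sol.energy {p u} (h : Sol p u) {a b : ℝ} (hab : a ≤ b)
    {φ φ' φ'' : ℝ → ℝ} (hφ : ∀ x, HasDerivAt φ (φ' x) x) (hφ' : ∀ x, HasDerivAt φ' (φ'' x) x)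
    (cφ'' : Continuous φ'') (W : ℝ → ℝ) (K : ℝ)
    (b0 : ∀ x, |φ x| ≤ K * (1 + |x|) * W x) (b1 : ∀ x, |φ' x| ≤ K * W x)
    (b2 : ∀ x, |φ'' x| ≤ K * W x)
    (iα : Integrable (fun q : ℝ × ℝ => W q.2 * eα p u q.1 q.2) (slab a b))
    (iβ : Integrable (fun q : ℝ × ℝ => W q.2 * eβ p u q.1 q.2) (slab a b))
    (ia : Integrable (fun x => φ x * en p u a x)) (ib : Integrable (fun x => φ x * en p u b x)) :
    (∫ x, φ x * en p u b x) - (∫ x, φ x * en p u a x) =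
      ∫ q, (φ' q.2 * eα p u q.1 q.2 + φ'' q.2 * eβ p u q.1 q.2) ∂(slab a b) := by
  have hp1 : p + 1 ≠ 0 := by have := h.hp; linarith
  have hv := h.sm
  have hh : ∀ t x, HasDerivAt (fun y => nl p (u t y) - dx (dx u) t y) (dt u t x) x := fun t x =>
    ((h.hnl t x).sub (hv.dx.dx.hx t x)).congr_deriv (by rw [← h.pde t x]; ring)
  have key := ext_identity (ρ := en p u)
    (ρt := fun t x => dx u t x * dx (dt u) t x + nl p (u t x) * dt u t x)
    (j := fun t x => dx u t x * dt u t x + 1 / 2 * (nl p (u t x) - dx (dx u) t x) ^ 2)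
    (α := eα p u) (β := eβ p u) (γ := fun _ _ => 0)
    hab (fun t x => ((((hv.dx.ht t x).pow 2).const_mul (1 / 2)).add
      ((h.hpw_t t x).const_mul (1 / (p + 1)))).congr_deriv (by
        rw [hv.comm t x]; field_simp; push_cast; ring)) h.cen
    ((hv.dx.cn.mul hv.dt.dx.cn).add (h.cnl.mul hv.dt.cn)) h.ceα h.ceβ continuous_const
    (fun t x => (((hv.dx.hx t x).mul (hv.dt.hx t x)).add
      (((hh t x).pow 2).const_mul (1 / 2))).congr_deriv (by push_cast; ring))
    (fun t x => ((hv.dx.hx t x).mul (hh t x)).congr_deriv (by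
      unfold eα; ring))
    hφ hφ' cφ'' W K b0 b1 b2 iα iβ (by simp) ia ib
  simpa using key

end GKdV

namespace GKdV

open Filter Topology

lemma slab_ae (a b : ℝ) : ∀ᵐ q ∂(slab a b), q.1 ∈ Set.Icc a b := by
  unfold slab
  have h1 : ∀ᵐ t ∂(volume.restrict (Set.Ioc a b)), t ∈ Set.Icc a b := by
    filter_upwards [ae_restrict_mem measurableSet_Ioc] with t ht using Set.Ioc_subset_Icc_self ht
  exact Measure.quasiMeasurePreserving_fst.ae h1

lemma slab_mul {f g : ℝ → ℝ → ℝ} (cf : Cn f) (cg : Cn g) {a b : ℝ}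
    (hf : Integrable (fun q : ℝ × ℝ => f q.1 q.2 ^ 2) (slab a b))
    (hg : Integrable (fun q : ℝ × ℝ => g q.1 q.2 ^ 2) (slab a b)) :
    Integrable (fun q : ℝ × ℝ => f q.1 q.2 * g q.1 q.2) (slab a b) := by
  refine (hf.add hg).mono' (Continuous.mul cf cg).aestronglyMeasurable ?_
  filter_upwards with q
  simp only [Pi.add_apply, Real.norm_eq_abs]
  rw [abs_le]
  constructor <;> nlinarith [sq_nonneg (f q.1 q.2 + g q.1 q.2), sq_nonneg (f q.1 q.2 - g q.1 q.2),
    sq_nonneg (f q.1 q.2), sq_nonneg (g q.1 q.2)]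

lemma pw_le {p : ℝ} (hp : 1 < p) {S y : ℝ} (h : |y| ≤ S) : pw p y ≤ S ^ (p - 1) * y ^ 2 := by
  rw [pw_eq hp]
  have := Real.rpow_le_rpow (abs_nonneg y) h (by linarith : 0 ≤ p - 1)
  nlinarith [sq_nonneg y]

lemma nl_sq_le {p : ℝ} (hp : 1 < p) {S y : ℝ} (h : |y| ≤ S) :
    nl p y ^ 2 ≤ (S ^ (p - 1)) ^ 2 * y ^ 2 := by
  have := Real.rpow_le_rpow (abs_nonneg y) h (by linarith : 0 ≤ p - 1)
  have h0 : 0 ≤ |y| ^ (p - 1) := Real.rpow_nonneg (abs_nonneg _) _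
  unfold nl
  rw [mul_pow]
  gcongr

lemma nl_lip {p : ℝ} (hp : 1 < p) {S y z : ℝ} (hy : |y| ≤ S) (hz : |z| ≤ S) :
    |nl p y - nl p z| ≤ p * S ^ (p - 1) * |y - z| := by
  have := (convex_Icc (-S) S).norm_image_sub_le_of_norm_hasDerivWithin_le (f := nl p)
    (f' := fun y => p * |y| ^ (p - 1)) (C := p * S ^ (p - 1))
    (fun x _ => (hasDerivAt_nl hp x).hasDerivWithinAt) (fun x hx => by
      have h1 : |x| ≤ S := abs_le.2 hx
      have h2 := Real.rpow_le_rpow (abs_nonneg x) h1 (by linarith : 0 ≤ p - 1)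
      have h0 : 0 ≤ |x| ^ (p - 1) := Real.rpow_nonneg (abs_nonneg _) _
      rw [Real.norm_eq_abs, abs_of_nonneg (by positivity)]
      gcongr) (abs_le.1 hz) (abs_le.1 hy)
  simpa [Real.norm_eq_abs] using this

section fixed
variable {p : ℝ} {u : ℝ → ℝ → ℝ}

lemma Sch.intsq {f : ℝ → ℝ → ℝ} (h : Sch f) (t : ℝ) (w : ℝ → ℝ) (hw : Continuous w) (C : ℝ)
    (k : ℕ) (hb : ∀ x, |w x| ≤ C * (1 + |x|) ^ k) : Integrable (fun x => w x * f t x ^ 2) := by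
  simpa [sq] using h.int2 h t w hw C k hb

lemma Sch.intsq1 {f : ℝ → ℝ → ℝ} (h : Sch f) (t : ℝ) : Integrable (fun x => f t x ^ 2) := by
  simpa using h.intsq t (fun _ => 1) continuous_const 1 0 (by simp)

lemma Sol.intpw (h : Sol p u) (t : ℝ) (w : ℝ → ℝ) (hw : Continuous w) (C : ℝ)
    (k : ℕ) (hb : ∀ x, |w x| ≤ C * (1 + |x|) ^ k) : Integrable (fun x => w x * pw p (u t x)) := by
  obtain ⟨S, hS⟩ := h.sch.bdd t
  have i := (h.sch.intsq t w hw C k hb).abs.const_mul (S ^ (p - 1))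
  refine i.mono' (hw.mul (h.cpw.slice t)).aestronglyMeasurable ?_
  filter_upwards with x
  rw [Real.norm_eq_abs, abs_mul, abs_mul, abs_of_nonneg (pw_nonneg p _), abs_of_nonneg (sq_nonneg (u t x))]
  have := pw_le h.hp (hS x)
  nlinarith [abs_nonneg (w x)]

lemma Sol.intpw1 (h : Sol p u) (t : ℝ) : Integrable (fun x => pw p (u t x)) := by
  simpa using h.intpw t (fun _ => 1) continuous_const 1 0 (by simp)

lemma Sol.inten (h : Sol p u) (t : ℝ) (w : ℝ → ℝ) (hw : Continuous w) (C : ℝ)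
    (k : ℕ) (hb : ∀ x, |w x| ≤ C * (1 + |x|) ^ k) : Integrable (fun x => w x * en p u t x) := by
  have i := ((h.sch.dx.intsq t w hw C k hb).const_mul (1/2)).add
    ((h.intpw t w hw C k hb).const_mul (1 / (p + 1)))
  refine i.congr ?_
  filter_upwards with x
  simp only [en, Pi.add_apply]; ring

lemma Sol.inten1 (h : Sol p u) (t : ℝ) : Integrable (fun x => en p u t x) := by
  simpa using h.inten t (fun _ => 1) continuous_const 1 0 (by simp)

lemma Sol.en_nonneg (h : Sol p u) (t x : ℝ) : 0 ≤ en p u t x := by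
  unfold en
  have := pw_nonneg p (u t x)
  have := h.hp
  positivity

/-- the total quantity: mass plus energy -/
noncomputable def KK (p : ℝ) (u : ℝ → ℝ → ℝ) (t : ℝ) : ℝ := ∫ x, (u t x ^ 2 + en p u t x)

lemma Sol.KK_eq (h : Sol p u) (t : ℝ) : KK p u t = (∫ x, u t x ^ 2) + ∫ x, en p u t x :=
  integral_add (h.sch.intsq1 t) (h.inten1 t)

lemma Sol.sup (h : Sol p u) (t x : ℝ) : u t x ^ 2 ≤ 2 * KK p u t := by
  have i1 : Integrable (fun y => 2 * (u t y * dx u t y)) := by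
    have := (h.sch.int2 h.sch.dx t (fun _ => 1) continuous_const 1 0 (by simp)).const_mul 2
    simpa using this
  have hd : ∀ y, HasDerivAt (fun y => u t y ^ 2) (2 * (u t y * dx u t y)) y := fun y =>
    ((h.sm.hx t y).pow 2).congr_deriv (by push_cast; ring)
  have h0 : Tendsto (fun y => u t y ^ 2) atBot (𝓝 0) :=
    tendsto_zero_of_hasDerivAt_of_integrableOn_Iic (a := x) (fun y _ => hd y) i1.integrableOn
      (h.sch.intsq1 t).integrableOn
  have e := integral_Iic_of_hasDerivAt_of_tendsto' (a := x) (fun y _ => hd y) i1.integrableOn h0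
  rw [sub_zero] at e
  rw [← e]
  have i2 : Integrable (fun y => u t y ^ 2 + en p u t y) := (h.sch.intsq1 t).add (h.inten1 t)
  have hpt : ∀ y, 2 * (u t y * dx u t y) ≤ 2 * (u t y ^ 2 + en p u t y) := by
    intro y
    have h1 : 0 ≤ 1 / (p + 1) * pw p (u t y) := by
      have := pw_nonneg p (u t y); have := h.hp; positivity
    unfold en
    nlinarith [sq_nonneg (u t y - dx u t y), sq_nonneg (u t y)]
  calc ∫ y in Set.Iic x, 2 * (u t y * dx u t y)
      ≤ ∫ y in Set.Iic x, 2 * (u t y ^ 2 + en p u t y) :=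
        integral_mono i1.integrableOn (i2.const_mul 2).integrableOn hpt
    _ ≤ ∫ y, 2 * (u t y ^ 2 + en p u t y) := by
        apply setIntegral_le_integral (i2.const_mul 2)
        filter_upwards with y
        have := h.en_nonneg t y
        show 0 ≤ 2 * (u t y ^ 2 + en p u t y)
        positivity
    _ = 2 * KK p u t := by rw [integral_const_mul]; rfl

end fixed

/-- the local bound hypothesis -/
structure Bd (p : ℝ) (u : ℝ → ℝ → ℝ) (a b N : ℝ) : Prop where
  sol : Sol p u
  le : a ≤ b
  bd : ∀ t ∈ Set.Icc a b, KK p u t ≤ N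

section bounded
variable {p : ℝ} {u : ℝ → ℝ → ℝ} {a b N : ℝ}

lemma Bd.sup (h : Bd p u a b N) {t : ℝ} (ht : t ∈ Set.Icc a b) (x : ℝ) :
    |u t x| ≤ √(2 * N) := by
  apply Real.abs_le_sqrt
  have := h.sol.sup t x
  have := h.bd t ht
  linarith

lemma Bd.iu (h : Bd p u a b N) : Integrable (fun q : ℝ × ℝ => u q.1 q.2 ^ 2) (slab a b) := by
  refine slab_int (f := fun t x => u t x ^ 2) (N := N) h.sol.sm.cn.sq (fun t x => sq_nonneg _)
    (fun t _ => h.sol.sch.intsq1 t) (fun t ht => ?_)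
  refine le_trans ?_ (h.bd t ht)
  rw [h.sol.KK_eq]
  have := integral_nonneg (μ := volume) (f := fun x => en p u t x) (fun x => h.sol.en_nonneg t x)
  linarith

lemma Bd.ien (h : Bd p u a b N) : Integrable (fun q : ℝ × ℝ => en p u q.1 q.2) (slab a b) := by
  refine slab_int (f := en p u) (N := N) h.sol.cen (h.sol.en_nonneg)
    (fun t _ => h.sol.inten1 t) (fun t ht => ?_)
  refine le_trans ?_ (h.bd t ht)
  rw [h.sol.KK_eq]
  have := integral_nonneg (μ := volume) (f := fun x => u t x ^ 2) (fun x => sq_nonneg _)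
  linarith

lemma Bd.iux (h : Bd p u a b N) : Integrable (fun q : ℝ × ℝ => dx u q.1 q.2 ^ 2) (slab a b) := by
  refine (h.ien.const_mul 2).mono' (Continuous.aestronglyMeasurable h.sol.sm.dx.cn.sq) ?_
  filter_upwards with q
  have := pw_nonneg p (u q.1 q.2)
  have := h.sol.hp
  have h1 : 0 ≤ 1 / (p + 1) * pw p (u q.1 q.2) := by positivity
  rw [Real.norm_eq_abs, abs_of_nonneg (sq_nonneg _)]
  unfold en; linarith

lemma Bd.ipw (h : Bd p u a b N) : Integrable (fun q : ℝ × ℝ => pw p (u q.1 q.2)) (slab a b) := by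
  refine (h.ien.const_mul (p + 1)).mono' (Continuous.aestronglyMeasurable h.sol.cpw) ?_
  filter_upwards with q
  have := h.sol.hp
  have h2 : (p + 1) * (1 / (p + 1)) = 1 := by field_simp
  rw [Real.norm_eq_abs, abs_of_nonneg (pw_nonneg _ _)]
  unfold en
  rw [mul_add, ← mul_assoc, ← mul_assoc, h2]
  have : 0 ≤ (p + 1) * (1 / 2) * dx u q.1 q.2 ^ 2 := by positivity
  linarith

lemma Bd.inl (h : Bd p u a b N) :
    Integrable (fun q : ℝ × ℝ => nl p (u q.1 q.2) ^ 2) (slab a b) := by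
  refine (h.iu.const_mul ((√(2 * N) ^ (p - 1)) ^ 2)).mono'
    (Continuous.aestronglyMeasurable h.sol.cnl.sq) ?_
  filter_upwards [slab_ae a b] with q hq
  rw [Real.norm_eq_abs, abs_of_nonneg (sq_nonneg _)]
  exact nl_sq_le h.sol.hp (h.sup hq q.2)

lemma Bd.imα (h : Bd p u a b N) : Integrable (fun q : ℝ × ℝ => mα p u q.1 q.2) (slab a b) :=
  ((h.iux.const_mul 3).add (h.ipw.const_mul (2 * p / (p + 1)))).neg

lemma Bd.imβ (h : Bd p u a b N) : Integrable (fun q : ℝ × ℝ => mβ u q.1 q.2) (slab a b) :=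
  (slab_mul h.sol.sm.cn h.sol.sm.dx.cn h.iu h.iux).const_mul (-2)

/-- mass conservation -/
lemma Bd.mass_const (h : Bd p u a b N) : ∫ x, u b x ^ 2 = ∫ x, u a x ^ 2 := by
  have := h.sol.mass h.le (φ := fun _ => 1) (φ' := fun _ => 0) (φ'' := fun _ => 0)
    (fun x => hasDerivAt_const x 1) (fun x => hasDerivAt_const x 0) continuous_const
    (fun _ => 1) 1 (by simp) (by simp) (by simp) (by simpa using h.imα) (by simpa using h.imβ)
    (by simpa using h.sol.sch.intsq1 a) (by simpa using h.sol.sch.intsq1 b)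
  simp at this
  linarith

/-- weights for the Kato smoothing argument -/
lemma exists_weight (e : ℝ) (he : 0 < e) (he1 : e ≤ 1) : ∃ φ w' : ℝ → ℝ,
    (∀ x, HasDerivAt φ ((1 + x ^ 2) / (1 + e * x ^ 2)) x) ∧
    (∀ x, HasDerivAt (fun x : ℝ => (1 + x ^ 2) / (1 + e * x ^ 2)) (w' x) x) ∧ Continuous w' ∧
    (∀ x, w' x ^ 2 ≤ 4 * ((1 + x ^ 2) / (1 + e * x ^ 2))) ∧
    (∀ x, (1 + x ^ 2) / (1 + e * x ^ 2) ≤ 1 / e) ∧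
    (∀ x, |φ x| ≤ 1 / e * |x|) ∧ (∀ x, |φ x| ≤ (1 + |x|) ^ 3) := by
  have hpos : ∀ x : ℝ, 0 < 1 + e * x ^ 2 := fun x => by positivity
  have hc : Continuous (fun x : ℝ => (1 + x ^ 2) / (1 + e * x ^ 2)) :=
    Continuous.div (by fun_prop) (by fun_prop) (fun x => (hpos x).ne')
  have hle : ∀ x : ℝ, (1 + x ^ 2) / (1 + e * x ^ 2) ≤ 1 / e := fun x => by
    rw [div_le_div_iff₀ (hpos x) he]; nlinarith
  have hle2 : ∀ x : ℝ, (1 + x ^ 2) / (1 + e * x ^ 2) ≤ 1 + x ^ 2 := fun x => by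
    apply div_le_self (by positivity); nlinarith [sq_nonneg x, mul_nonneg he.le (sq_nonneg x)]
  have h0 : ∀ x : ℝ, 0 ≤ (1 + x ^ 2) / (1 + e * x ^ 2) := fun x => by
    have := hpos x; positivity
  refine ⟨fun x => ∫ y in (0:ℝ)..x, (1 + y ^ 2) / (1 + e * y ^ 2),
    fun x => 2 * x * (1 - e) / (1 + e * x ^ 2) ^ 2, ?_, ?_, ?_, ?_, hle, ?_, ?_⟩
  · intro x
    exact intervalIntegral.integral_hasDerivAt_right (hc.intervalIntegrable _ _)
      (hc.stronglyMeasurableAtFilter _ _) hc.continuousAt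
  · intro x
    have h1 : HasDerivAt (fun x : ℝ => 1 + x ^ 2) (2 * x) x :=
      (((hasDerivAt_id x).pow 2).const_add 1).congr_deriv (by simp)
    have h2 : HasDerivAt (fun x : ℝ => 1 + e * x ^ 2) (e * (2 * x)) x :=
      ((((hasDerivAt_id x).pow 2).const_mul e).const_add 1).congr_deriv (by simp)
    refine (h1.div h2 (hpos x).ne').congr_deriv ?_
    congr 1; ring
  · exact Continuous.div (by fun_prop) (by fun_prop) (fun x => (pow_pos (hpos x) 2).ne')
  · intro x
    rw [div_pow, ← mul_div_assoc, div_le_div_iff₀ (by have := hpos x; positivity) (hpos x)]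
    have h1 : (1:ℝ) ≤ 1 + e * x ^ 2 := by nlinarith [mul_nonneg he.le (sq_nonneg x)]
    have h2 : (1 + e * x ^ 2) ≤ ((1 + e * x ^ 2) ^ 2) ^ 2 := by
      rw [← pow_mul]; exact le_self_pow₀ h1 (by norm_num)
    have h3 : (2 * x * (1 - e)) ^ 2 ≤ 4 * (1 + x ^ 2) := by
      have : (1 - e) ^ 2 ≤ 1 := by nlinarith
      calc (2 * x * (1 - e)) ^ 2 = 4 * x ^ 2 * (1 - e) ^ 2 := by ring
        _ ≤ 4 * x ^ 2 * 1 := by gcongr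
        _ ≤ _ := by linarith
    exact mul_le_mul h3 h2 (hpos x).le (by positivity)
  · intro x
    have := intervalIntegral.norm_integral_le_of_norm_le_const (a := 0) (b := x) (C := 1 / e)
      (f := fun y => (1 + y ^ 2) / (1 + e * y ^ 2)) (fun y _ => by
        rw [Real.norm_eq_abs, abs_of_nonneg (h0 y)]; exact hle y)
    simpa using this
  · intro x
    have := intervalIntegral.norm_integral_le_of_norm_le_const (a := 0) (b := x) (C := 1 + x ^ 2)
      (f := fun y => (1 + y ^ 2) / (1 + e * y ^ 2)) (fun y hy => by
        rw [Real.norm_eq_abs, abs_of_nonneg (h0 y)]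
        refine (hle2 y).trans ?_
        have : |y| ≤ |x| := by
          rcases Set.mem_uIoc.1 hy with h | h
          · rw [abs_of_pos h.1, abs_of_pos (h.1.trans_le h.2)]; exact h.2
          · rw [abs_of_nonpos h.2, abs_of_nonpos (h.1.le.trans h.2)]; linarith [h.1]
        have := sq_le_sq.2 this
        linarith)
    rw [Real.norm_eq_abs, sub_zero] at this
    refine this.trans ?_
    rw [← sq_abs x]
    have := abs_nonneg x
    nlinarith [mul_nonneg this this]

/-- Kato smoothing for the mass, with quadratic weight -/
lemma Bd.kato (h : Bd p u a b N) : Integrable (fun q : ℝ × ℝ =>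
    (1 + q.2 ^ 2) * (dx u q.1 q.2 ^ 2 + pw p (u q.1 q.2))) (slab a b) := by
  have hp := h.sol.hp
  have ia := h.sol.sch.intsq a (fun x => (1 + |x|) ^ 3) (by fun_prop) 1 3
    (fun x => by rw [abs_of_nonneg (by positivity), one_mul])
  have ib := h.sol.sch.intsq b (fun x => (1 + |x|) ^ 3) (by fun_prop) 1 3
    (fun x => by rw [abs_of_nonneg (by positivity), one_mul])
  have hen : ∀ n : ℕ, (0:ℝ) < 1 / (n + 1) := fun n => by positivity
  have hen1 : ∀ n : ℕ, 1 / (n + 1 : ℝ) ≤ 1 := fun n => by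
    rw [div_le_one (by positivity)]; linarith [(Nat.cast_nonneg n : (0:ℝ) ≤ n)]
  refine fatou_int (f := fun n q => (1 + q.2 ^ 2) / (1 + 1 / ((n : ℝ) + 1) * q.2 ^ 2) *
      (dx u q.1 q.2 ^ 2 + pw p (u q.1 q.2))) ?_ ?_
      ((∫ x, (1 + |x|) ^ 3 * u a x ^ 2) + (∫ x, (1 + |x|) ^ 3 * u b x ^ 2)
        + ∫ q, 4 * u q.1 q.2 ^ 2 ∂(slab a b)) ?_ ?_
  · intro n
    obtain ⟨φ, w', d1, d2, cw', bw', bw, bφ, bφ3⟩ := exists_weight _ (hen n) (hen1 n)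
    have cw : Continuous (fun x : ℝ => (1 + x ^ 2) / (1 + 1 / ((n : ℝ) + 1) * x ^ 2)) :=
      continuous_iff_continuousAt.2 fun x => (d2 x).continuousAt
    refine ((h.iux.add h.ipw).const_mul (1 / (1 / ((n:ℝ) + 1)))).mono'
      ((Cn.comp_x cw).mul (Continuous.add h.sol.sm.dx.cn.sq h.sol.cpw)).aestronglyMeasurable ?_
    filter_upwards with q
    have h1 := pw_nonneg p (u q.1 q.2)
    have h2 : 0 ≤ (1 + q.2 ^ 2) / (1 + 1 / ((n : ℝ) + 1) * q.2 ^ 2) := by positivity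
    rw [Real.norm_eq_abs, abs_of_nonneg (by positivity)]
    exact mul_le_mul_of_nonneg_right (bw q.2) (by positivity)
  · intro n q
    have h1 := pw_nonneg p (u q.1 q.2)
    positivity
  · intro n
    obtain ⟨φ, w', d1, d2, cw', bw', bw, bφ, bφ3⟩ := exists_weight _ (hen n) (hen1 n)
    set w : ℝ → ℝ := fun x => (1 + x ^ 2) / (1 + 1 / ((n : ℝ) + 1) * x ^ 2) with hw
    set E : ℝ := 1 / (1 / ((n:ℝ) + 1)) with hE
    have hE1 : 1 ≤ E := by rw [hE, one_div_one_div]; linarith [(Nat.cast_nonneg n : (0:ℝ) ≤ n)]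
    have w0 : ∀ x, 0 ≤ w x := fun x => by simp only [hw]; positivity
    have cw : Continuous w := continuous_iff_continuousAt.2 fun x => (d2 x).continuousAt
    have cφ : Continuous φ := continuous_iff_continuousAt.2 fun x => (d1 x).continuousAt
    have bw'' : ∀ x, |w' x| ≤ 2 * E := fun x => by
      apply abs_le_of_sq_le_sq _ (by positivity)
      have := bw' x
      have := bw x
      nlinarith
    have iφa : Integrable (fun x => φ x * u a x ^ 2) :=
      h.sol.sch.intsq a φ cφ 1 3 (fun x => by rw [one_mul]; exact bφ3 x)
    have iφb : Integrable (fun x => φ x * u b x ^ 2) :=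
      h.sol.sch.intsq b φ cφ 1 3 (fun x => by rw [one_mul]; exact bφ3 x)
    have key := h.sol.mass h.le d1 d2 cw' (fun _ => 1) (2 * E)
      (fun x => by have := bφ x; nlinarith [abs_nonneg x])
      (fun x => by
        have h1 := w0 x; have h2 := bw x
        rw [abs_of_nonneg h1]; linarith)
      (fun x => by have := bw'' x; linarith)
      (by simpa using h.imα) (by simpa using h.imβ) iφa iφb
    have iF : Integrable (fun q : ℝ × ℝ => w q.2 * mα p u q.1 q.2 + w' q.2 * mβ u q.1 q.2)
        (slab a b) := by
      refine Integrable.add ?_ ?_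
      · refine h.imα.bdd_mul (c := E) (Cn.comp_x cw).aestronglyMeasurable ?_
        filter_upwards with q
        rw [Real.norm_eq_abs, abs_of_nonneg (w0 q.2)]; exact bw q.2
      · refine h.imβ.bdd_mul (c := 2 * E) (Cn.comp_x cw').aestronglyMeasurable ?_
        filter_upwards with q using bw'' q.2
    have i4 := h.iu.const_mul 4
    have hmono : ∫ q : ℝ × ℝ, w q.2 * (dx u q.1 q.2 ^ 2 + pw p (u q.1 q.2)) ∂(slab a b) ≤
        ∫ q, (-(w q.2 * mα p u q.1 q.2 + w' q.2 * mβ u q.1 q.2) + 4 * u q.1 q.2 ^ 2) ∂(slab a b) := by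
      refine integral_mono_of_nonneg ?_ (iF.neg.add i4) ?_
      · filter_upwards with q
        have h1 := pw_nonneg p (u q.1 q.2)
        have := w0 q.2
        show 0 ≤ w q.2 * (dx u q.1 q.2 ^ 2 + pw p (u q.1 q.2))
        positivity
      · filter_upwards with q
        obtain ⟨t, x⟩ := q
        simp only [mα, mβ]
        have h1 := pw_nonneg p (u t x)
        have h2 := w0 x
        have h3 := bw' x
        have h4 : 1 ≤ 2 * p / (p + 1) := by rw [le_div_iff₀ (by linarith)]; linarith
        have h5 : w x * pw p (u t x) ≤ 2 * p / (p + 1) * (w x * pw p (u t x)) :=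
          le_mul_of_one_le_left (by positivity) h4
        -- 2 |w' u ux| ≤ w ux² + 4 u²
        have h6 : -(2 * (w' x * (u t x * dx u t x))) ≤ w x * dx u t x ^ 2 + 4 * u t x ^ 2 := by
          have h7 : (w' x * dx u t x) ^ 2 ≤ 4 * (w x * dx u t x ^ 2) := by
            rw [mul_pow, ← mul_assoc]
            exact mul_le_mul_of_nonneg_right h3 (sq_nonneg _)
          nlinarith [sq_nonneg (w' x * dx u t x + 4 * u t x)]
        have h8 : 0 ≤ w x * dx u t x ^ 2 := by positivity
        nlinarith
    have hsplit : ∫ q, (-(w q.2 * mα p u q.1 q.2 + w' q.2 * mβ u q.1 q.2) + 4 * u q.1 q.2 ^ 2)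
        ∂(slab a b) = -(∫ q, (w q.2 * mα p u q.1 q.2 + w' q.2 * mβ u q.1 q.2) ∂(slab a b))
          + ∫ q, 4 * u q.1 q.2 ^ 2 ∂(slab a b) := by
      rw [← integral_neg]
      exact integral_add iF.neg i4
    have ha1 : |∫ x, φ x * u a x ^ 2| ≤ ∫ x, (1 + |x|) ^ 3 * u a x ^ 2 := by
      refine (abs_integral_le_integral_abs).trans (integral_mono iφa.abs ia (fun x => ?_))
      simp only [abs_mul, abs_of_nonneg (sq_nonneg (u a x))]
      exact mul_le_mul_of_nonneg_right (bφ3 x) (sq_nonneg _)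
    have hb1 : |∫ x, φ x * u b x ^ 2| ≤ ∫ x, (1 + |x|) ^ 3 * u b x ^ 2 := by
      refine (abs_integral_le_integral_abs).trans (integral_mono iφb.abs ib (fun x => ?_))
      simp only [abs_mul, abs_of_nonneg (sq_nonneg (u b x))]
      exact mul_le_mul_of_nonneg_right (bφ3 x) (sq_nonneg _)
    have := abs_le.1 ha1
    have := abs_le.1 hb1
    have key' : (∫ x, φ x * u b x ^ 2) - (∫ x, φ x * u a x ^ 2) =
      ∫ q, (w q.2 * mα p u q.1 q.2 + w' q.2 * mβ u q.1 q.2) ∂(slab a b) := key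
    show ∫ q : ℝ × ℝ, w q.2 * (dx u q.1 q.2 ^ 2 + pw p (u q.1 q.2)) ∂(slab a b) ≤ _
    linarith
  · intro q
    apply Tendsto.mul_const
    have h1 : Tendsto (fun n : ℕ => 1 + 1 / ((n:ℝ) + 1) * q.2 ^ 2) atTop
        (𝓝 (1 + 0 * q.2 ^ 2)) :=
      ((tendsto_one_div_add_atTop_nhds_zero_nat).mul_const _).const_add 1
    have h2 : Tendsto (fun n : ℕ => (1 + q.2 ^ 2) / (1 + 1 / ((n:ℝ) + 1) * q.2 ^ 2)) atTop
        (𝓝 ((1 + q.2 ^ 2) / (1 + 0 * q.2 ^ 2))) := tendsto_const_nhds.div h1 (by simp)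
    simpa using h2

end bounded

end GKdV

namespace GKdV

open Filter Topology

/-- difference quotient in space -/
noncomputable def sh (δ : ℝ) (f : ℝ → ℝ → ℝ) : ℝ → ℝ → ℝ := fun t x => (f t (x + δ) - f t x) / δ

lemma Cn.shift {f : ℝ → ℝ → ℝ} (h : Cn f) (δ : ℝ) : Cn (fun t x => f t (x + δ)) := by
  have h' : Continuous (fun q : ℝ × ℝ => f q.1 q.2) := h
  exact h'.comp (f := fun q : ℝ × ℝ => (q.1, q.2 + δ)) (by fun_prop)

lemma Cn.sh {f : ℝ → ℝ → ℝ} (h : Cn f) (δ : ℝ) : Cn (sh δ f) := by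
  have := (h.shift δ).sub h
  exact Continuous.div_const this δ

lemma Sm.sh {f : ℝ → ℝ → ℝ} (h : Sm f) (δ : ℝ) : Sm (sh δ f) := by
  have h' : ContDiff ℝ (⊤ : ℕ∞) (fun q : ℝ × ℝ => f q.1 q.2) := h
  have h1 : ContDiff ℝ (⊤ : ℕ∞) (fun q : ℝ × ℝ => f q.1 (q.2 + δ)) :=
    h'.comp (f := fun q : ℝ × ℝ => (q.1, q.2 + δ)) (by fun_prop)
  exact (h1.sub h').div_const δ

lemma Sm.dx_sh {f : ℝ → ℝ → ℝ} (h : Sm f) (δ : ℝ) : GKdV.dx (GKdV.sh δ f) = GKdV.sh δ (GKdV.dx f) := by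
  funext t x
  have h1 : HasDerivAt (fun y => f t (y + δ)) (GKdV.dx f t (x + δ)) x :=
    (h.hx t (x + δ)).comp_add_const x δ
  exact ((h1.sub (h.hx t x)).div_const δ).deriv

lemma Sm.dt_sh {f : ℝ → ℝ → ℝ} (h : Sm f) (δ : ℝ) : GKdV.dt (GKdV.sh δ f) = GKdV.sh δ (GKdV.dt f) := by
  funext t x
  exact (((h.ht t (x + δ)).sub (h.ht t x)).div_const δ).deriv

lemma quot_sq_le {f f' : ℝ → ℝ} (hf : ∀ x, HasDerivAt f (f' x) x) (cf : Continuous f')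
    {δ : ℝ} (hδ : 0 < δ) (x : ℝ) :
    ((f (x + δ) - f x) / δ) ^ 2 ≤ ∫ s in Set.Ioc (0:ℝ) 1, f' (x + s * δ) ^ 2 := by
  set m := (f (x + δ) - f x) / δ with hm
  have c1 : Continuous (fun s : ℝ => f' (x + s * δ)) := by fun_prop
  have e1 : ∫ s in (0:ℝ)..1, f' (x + s * δ) = m := by
    have h1 : ∀ s ∈ Set.uIcc (0:ℝ) 1, HasDerivAt (fun s => f (x + s * δ) / δ) (f' (x + s * δ)) s := by
      intro s _
      have h2 : HasDerivAt (fun s : ℝ => x + s * δ) δ s :=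
        (((hasDerivAt_id s).mul_const δ).const_add x).congr_deriv (by simp)
      have h3 : HasDerivAt (fun s : ℝ => f (x + s * δ)) (f' (x + s * δ) * δ) s :=
        HasDerivAt.comp s (hf (x + s * δ)) h2
      exact (h3.div_const δ).congr_deriv (by field_simp)
    rw [intervalIntegral.integral_eq_sub_of_hasDerivAt h1 (c1.intervalIntegrable _ _), hm]
    simp; ring
  have e2 : 0 ≤ ∫ s in (0:ℝ)..1, (f' (x + s * δ) - m) ^ 2 :=
    intervalIntegral.integral_nonneg (by norm_num) (fun s _ => sq_nonneg _)
  have e3 : ∫ s in (0:ℝ)..1, (f' (x + s * δ) - m) ^ 2 =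
      (∫ s in (0:ℝ)..1, f' (x + s * δ) ^ 2) - 2 * m * m + m ^ 2 := by
    have : ∀ s, (f' (x + s * δ) - m) ^ 2 = f' (x + s * δ) ^ 2 - 2 * m * f' (x + s * δ) + m ^ 2 :=
      fun s => by ring
    simp_rw [this]
    rw [intervalIntegral.integral_add, intervalIntegral.integral_sub,
      intervalIntegral.integral_const_mul, e1]
    · simp
    all_goals apply Continuous.intervalIntegrable; fun_prop
  rw [← intervalIntegral.integral_of_le (by norm_num)]
  rw [e3] at e2
  nlinarith

lemma lint_quot {f f' : ℝ → ℝ} (hf : ∀ x, HasDerivAt f (f' x) x) (cf : Continuous f')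
    {δ : ℝ} (hδ : 0 < δ) (hδ1 : δ ≤ 1) :
    ∫⁻ x, ENNReal.ofReal ((1 + x ^ 2) * ((f (x + δ) - f x) / δ) ^ 2) ≤
      3 * ∫⁻ x, ENNReal.ofReal ((1 + x ^ 2) * f' x ^ 2) := by
  have h1 : ∀ x, ENNReal.ofReal ((1 + x ^ 2) * ((f (x + δ) - f x) / δ) ^ 2) ≤
      ∫⁻ s in Set.Ioc (0:ℝ) 1, ENNReal.ofReal ((1 + x ^ 2) * f' (x + s * δ) ^ 2) := by
    intro x
    rw [← ofReal_integral_eq_lintegral_ofReal]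
    · apply ENNReal.ofReal_le_ofReal
      rw [integral_const_mul]
      exact mul_le_mul_of_nonneg_left (quot_sq_le hf cf hδ x) (by positivity)
    · exact (Continuous.integrableOn_Icc (by fun_prop)).mono_set Set.Ioc_subset_Icc_self
    · filter_upwards with s
      simp only [Pi.zero_apply]; positivity
  refine (lintegral_mono h1).trans ?_
  rw [lintegral_lintegral_swap]
  · have h2 : ∀ s ∈ Set.Ioc (0:ℝ) 1, ∫⁻ x, ENNReal.ofReal ((1 + x ^ 2) * f' (x + s * δ) ^ 2) ≤
        3 * ∫⁻ x, ENNReal.ofReal ((1 + x ^ 2) * f' x ^ 2) := by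
      intro s hs
      have h3 : ∀ x, ENNReal.ofReal ((1 + x ^ 2) * f' (x + s * δ) ^ 2) ≤
          3 * ENNReal.ofReal ((1 + (x + s * δ) ^ 2) * f' (x + s * δ) ^ 2) := by
        intro x
        rw [show (3 : ENNReal) = ENNReal.ofReal 3 by simp, ← ENNReal.ofReal_mul (by norm_num)]
        apply ENNReal.ofReal_le_ofReal
        rw [← mul_assoc]
        apply mul_le_mul_of_nonneg_right _ (sq_nonneg _)
        have h4 : 0 ≤ s * δ := mul_nonneg hs.1.le hδ.le
        have h5 : s * δ ≤ 1 := mul_le_one₀ hs.2 hδ.le hδ1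
        nlinarith [sq_nonneg (x + 2 * (s * δ)), sq_nonneg (2 * x + 3 * (s * δ))]
      refine (lintegral_mono h3).trans ?_
      rw [lintegral_const_mul _ (by fun_prop),
        lintegral_add_right_eq_self (fun x => ENNReal.ofReal ((1 + x ^ 2) * f' x ^ 2)) (s * δ)]
    refine (setLIntegral_mono' measurableSet_Ioc h2).trans ?_
    simp
  · apply Measurable.aemeasurable
    have hc : Continuous (fun q : ℝ × ℝ => (1 + q.1 ^ 2) * f' (q.1 + q.2 * δ) ^ 2) := by fun_prop
    exact ENNReal.measurable_ofReal.comp hc.measurable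

lemma of_lint {X : Type*} [MeasurableSpace X] {μ : Measure X} {F G : X → ℝ}
    (hF : AEStronglyMeasurable F μ) (F0 : ∀ x, 0 ≤ F x) (G0 : ∀ x, 0 ≤ G x)
    (hG : Integrable G μ)
    (h : ∫⁻ x, ENNReal.ofReal (F x) ∂μ ≤ 3 * ∫⁻ x, ENNReal.ofReal (G x) ∂μ) :
    Integrable F μ ∧ ∫ x, F x ∂μ ≤ 3 * ∫ x, G x ∂μ := by
  have e := ofReal_integral_eq_lintegral_ofReal hG (Eventually.of_forall G0)
  have h2 : ∫⁻ x, ENNReal.ofReal (F x) ∂μ ≤ ENNReal.ofReal (3 * ∫ x, G x ∂μ) := by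
    rw [ENNReal.ofReal_mul (by norm_num), e]; simpa using h
  have iF : Integrable F μ := by
    refine ⟨hF, ?_⟩
    rw [hasFiniteIntegral_iff_ofReal (Eventually.of_forall F0)]
    exact h2.trans_lt ENNReal.ofReal_lt_top
  refine ⟨iF, ?_⟩
  rw [← ofReal_integral_eq_lintegral_ofReal iF (Eventually.of_forall F0)] at h2
  have : 0 ≤ 3 * ∫ x, G x ∂μ := mul_nonneg (by norm_num) (integral_nonneg G0)
  exact (ENNReal.ofReal_le_ofReal_iff this).1 h2

lemma sh_slice {f : ℝ → ℝ → ℝ} (h : Sm f) (t : ℝ) {δ : ℝ} (hδ : 0 < δ) (hδ1 : δ ≤ 1)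
    (hi : Integrable (fun x => (1 + x ^ 2) * dx f t x ^ 2)) :
    Integrable (fun x => (1 + x ^ 2) * sh δ f t x ^ 2) ∧
      ∫ x, (1 + x ^ 2) * sh δ f t x ^ 2 ≤ 3 * ∫ x, (1 + x ^ 2) * dx f t x ^ 2 := by
  have cs := (h.sh δ).cn.slice t
  refine of_lint (Continuous.aestronglyMeasurable (by fun_prop)) (fun x => by positivity)
    (fun x => by positivity) hi (lint_quot (h.hx t) (h.dx.cn.slice t) hδ hδ1)

lemma sh_slab {f : ℝ → ℝ → ℝ} (h : Sm f) (a b : ℝ) {δ : ℝ} (hδ : 0 < δ) (hδ1 : δ ≤ 1)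
    (hi : Integrable (fun q : ℝ × ℝ => (1 + q.2 ^ 2) * dx f q.1 q.2 ^ 2) (slab a b)) :
    Integrable (fun q : ℝ × ℝ => (1 + q.2 ^ 2) * sh δ f q.1 q.2 ^ 2) (slab a b) ∧
      ∫ q : ℝ × ℝ, (1 + q.2 ^ 2) * sh δ f q.1 q.2 ^ 2 ∂(slab a b) ≤
      3 * ∫ q : ℝ × ℝ, (1 + q.2 ^ 2) * dx f q.1 q.2 ^ 2 ∂(slab a b) := by
  have c1 : Continuous (fun q : ℝ × ℝ => (1 + q.2 ^ 2) * sh δ f q.1 q.2 ^ 2) :=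
    Continuous.mul (by fun_prop) (h.sh δ).cn.sq
  have c2 : Continuous (fun q : ℝ × ℝ => (1 + q.2 ^ 2) * dx f q.1 q.2 ^ 2) :=
    Continuous.mul (by fun_prop) h.dx.cn.sq
  refine of_lint c1.aestronglyMeasurable (fun x => by positivity)
    (fun x => by positivity) hi ?_
  unfold slab
  rw [lintegral_prod (fun q : ℝ × ℝ => ENNReal.ofReal ((1 + q.2 ^ 2) * sh δ f q.1 q.2 ^ 2))
      (ENNReal.measurable_ofReal.comp c1.measurable).aemeasurable,
    lintegral_prod (fun q : ℝ × ℝ => ENNReal.ofReal ((1 + q.2 ^ 2) * dx f q.1 q.2 ^ 2))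
      (ENNReal.measurable_ofReal.comp c2.measurable).aemeasurable,
    ← lintegral_const_mul' _ _ (by simp)]
  exact lintegral_mono fun t => lint_quot (h.hx t) (h.dx.cn.slice t) hδ hδ1

lemma sh_int {f : ℝ → ℝ → ℝ} (cf : Cn f) (a b δ : ℝ)
    (hi : Integrable (fun q : ℝ × ℝ => f q.1 q.2 ^ 2) (slab a b)) :
    Integrable (fun q : ℝ × ℝ => sh δ f q.1 q.2 ^ 2) (slab a b) := by
  have mp : MeasurePreserving (fun q : ℝ × ℝ => (q.1, q.2 + δ)) (slab a b) (slab a b) :=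
    (MeasurePreserving.id _).prod (measurePreserving_add_right volume δ)
  have i2 : Integrable (fun q : ℝ × ℝ => f q.1 (q.2 + δ) ^ 2) (slab a b) :=
    mp.integrable_comp_of_integrable hi
  have i3 := ((i2.add hi).const_mul (2 / δ ^ 2))
  refine i3.mono' (Continuous.aestronglyMeasurable (cf.sh δ).sq) ?_
  filter_upwards with q
  rw [Real.norm_eq_abs, abs_of_nonneg (sq_nonneg _)]
  unfold sh
  simp only [Pi.add_apply]
  rw [div_pow, div_mul_eq_mul_div]
  gcongr
  nlinarith [sq_nonneg (f q.1 (q.2 + δ) + f q.1 q.2)]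

section
variable {p : ℝ} {u : ℝ → ℝ → ℝ} {a b N : ℝ}

lemma Bd.katox (h : Bd p u a b N) :
    Integrable (fun q : ℝ × ℝ => (1 + q.2 ^ 2) * dx u q.1 q.2 ^ 2) (slab a b) := by
  refine h.kato.mono' (Continuous.aestronglyMeasurable (Continuous.mul (by fun_prop)
    h.sol.sm.dx.cn.sq)) ?_
  filter_upwards with q
  have := pw_nonneg p (u q.1 q.2)
  rw [Real.norm_eq_abs, abs_of_nonneg (by positivity)]
  gcongr; linarith

lemma Bd.katopw (h : Bd p u a b N) :
    Integrable (fun q : ℝ × ℝ => (1 + q.2 ^ 2) * pw p (u q.1 q.2)) (slab a b) := by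
  refine h.kato.mono' (Continuous.aestronglyMeasurable (Continuous.mul (by fun_prop)
    h.sol.cpw)) ?_
  filter_upwards with q
  have := pw_nonneg p (u q.1 q.2)
  rw [Real.norm_eq_abs, abs_of_nonneg (by positivity)]
  gcongr
  nlinarith [sq_nonneg (dx u q.1 q.2)]

lemma Sol.int1 (h : Sol p u) (t : ℝ) : Integrable (fun x => (1 + x ^ 2) * dx u t x ^ 2) := by
  refine h.sch.dx.intsq t (fun x => 1 + x ^ 2) (by fun_prop) 1 2 (fun x => ?_)
  rw [abs_of_nonneg (by positivity), ← sq_abs x]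
  nlinarith [abs_nonneg x]

/-- the smoothing bound for fixed difference quotient -/
lemma Bd.sh_bound (h : Bd p u a b N) {δ : ℝ} (hδ : 0 < δ) (hδ1 : δ ≤ 1) :
    ∫ q : ℝ × ℝ, sh δ (dx u) q.1 q.2 ^ 2 ∂(slab a b) ≤
      1 / 2 * (3 * (∫ x, (1 + x ^ 2) * dx u a x ^ 2) + 3 * (∫ x, (1 + x ^ 2) * dx u b x ^ 2) +
      (1 + (p * √(2 * N) ^ (p - 1)) ^ 2) *
        (3 * ∫ q : ℝ × ℝ, (1 + q.2 ^ 2) * dx u q.1 q.2 ^ 2 ∂(slab a b))) := by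
  set L := p * √(2 * N) ^ (p - 1) with hL
  have sol := h.sol
  set g := sh δ (fun t x => nl p (u t x)) with hg
  have cg : Cn g := sol.cnl.sh δ
  have sv : Sm (sh δ u) := sol.sm.sh δ
  have cv := sv.cn
  have cvx : Cn (sh δ (dx u)) := sol.sm.dx.cn.sh δ
  obtain ⟨iv, bv⟩ := sh_slab sol.sm a b hδ hδ1 h.katox
  obtain ⟨ia, ba⟩ := sh_slice sol.sm a hδ hδ1 (sol.int1 a)
  obtain ⟨ib, bb⟩ := sh_slice sol.sm b hδ hδ1 (sol.int1 b)
  have ivx : Integrable (fun q : ℝ × ℝ => sh δ (dx u) q.1 q.2 ^ 2) (slab a b) :=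
    sh_int sol.sm.dx.cn a b δ h.iux
  have gle : ∀ q : ℝ × ℝ, q.1 ∈ Set.Icc a b → g q.1 q.2 ^ 2 ≤ L ^ 2 * sh δ u q.1 q.2 ^ 2 := by
    intro q hq
    have := nl_lip sol.hp (h.sup hq (q.2 + δ)) (h.sup hq q.2)
    have h2 : |g q.1 q.2| ≤ |L * sh δ u q.1 q.2| := by
      have hL0 : 0 ≤ L := by have := sol.hp; positivity
      rw [hg, abs_mul, abs_of_nonneg hL0]
      unfold sh
      rw [abs_div, abs_div, ← mul_div_assoc]
      gcongr
    have := sq_le_sq.2 h2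
    rw [mul_pow] at this; exact this
  have iv0 : Integrable (fun q : ℝ × ℝ => sh δ u q.1 q.2 ^ 2) (slab a b) := by
    refine iv.mono' (Continuous.aestronglyMeasurable cv.sq) ?_
    filter_upwards with q
    rw [Real.norm_eq_abs, abs_of_nonneg (sq_nonneg _)]
    nlinarith [mul_nonneg (sq_nonneg q.2) (sq_nonneg (sh δ u q.1 q.2))]
  have ig1 : Integrable (fun q : ℝ × ℝ => (1 + q.2 ^ 2) * g q.1 q.2 ^ 2) (slab a b) := by
    refine (iv.const_mul (L ^ 2)).mono' (Continuous.aestronglyMeasurable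
      (Continuous.mul (by fun_prop) cg.sq)) ?_
    filter_upwards [slab_ae a b] with q hq
    rw [Real.norm_eq_abs, abs_of_nonneg (by positivity)]
    nlinarith [gle q hq, sq_nonneg q.2]
  have ig : Integrable (fun q : ℝ × ℝ => g q.1 q.2 ^ 2) (slab a b) := by
    refine ig1.mono' (Continuous.aestronglyMeasurable cg.sq) ?_
    filter_upwards with q
    rw [Real.norm_eq_abs, abs_of_nonneg (sq_nonneg _)]
    nlinarith [mul_nonneg (sq_nonneg q.2) (sq_nonneg (g q.1 q.2))]
  have cxg : Cn (fun t x => x * g t x) := Continuous.mul continuous_snd cg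
  have ixg : Integrable (fun q : ℝ × ℝ => (q.2 * g q.1 q.2) ^ 2) (slab a b) := by
    refine ig1.mono' (Continuous.aestronglyMeasurable cxg.sq) ?_
    filter_upwards with q
    rw [Real.norm_eq_abs, abs_of_nonneg (sq_nonneg _)]
    nlinarith [sq_nonneg (g q.1 q.2)]
  have ivg := slab_mul cv cg iv0 ig
  have ixvg := slab_mul cvx cxg ivx ixg
  have ivvx := slab_mul cv cvx iv0 ivx
  have iα : Integrable (fun q : ℝ × ℝ => -(3 * dx (sh δ u) q.1 q.2 ^ 2 +
      2 * (sh δ u q.1 q.2 * g q.1 q.2))) (slab a b) := by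
    rw [sol.sm.dx_sh]
    exact ((ivx.const_mul 3).add (ivg.const_mul 2)).neg
  have iγ : Integrable (fun q : ℝ × ℝ => q.2 * (-2 * (dx (sh δ u) q.1 q.2 * g q.1 q.2)))
      (slab a b) := by
    rw [sol.sm.dx_sh]
    refine (ixvg.const_mul (-2)).congr ?_
    filter_upwards with q; ring
  have bx : ∀ t, Integrable (fun x => (1 + x ^ 2) * sh δ u t x ^ 2) →
      Integrable (fun x => x * sh δ u t x ^ 2) ∧
      |∫ x, x * sh δ u t x ^ 2| ≤ ∫ x, (1 + x ^ 2) * sh δ u t x ^ 2 := by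
    intro t it
    have hb : ∀ x, |x * sh δ u t x ^ 2| ≤ (1 + x ^ 2) * sh δ u t x ^ 2 := by
      intro x
      rw [abs_mul, abs_of_nonneg (sq_nonneg (sh δ u t x))]
      apply mul_le_mul_of_nonneg_right _ (sq_nonneg _)
      rw [← sq_abs x]; nlinarith [sq_nonneg (|x| - 1)]
    have ct := cv.slice t
    have i1 : Integrable (fun x => x * sh δ u t x ^ 2) :=
      it.mono' (Continuous.aestronglyMeasurable (by fun_prop)) (Eventually.of_forall hb)
    exact ⟨i1, (abs_integral_le_integral_abs).trans (integral_mono i1.abs it hb)⟩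
  obtain ⟨ixa, bxa⟩ := bx a ia
  obtain ⟨ixb, bxb⟩ := bx b ib
  have key := mass_general sv cg
    (gx := sh δ (fun t x => p * |u t x| ^ (p - 1) * dx u t x))
    (fun t x => by
      have h1 : HasDerivAt (fun y => nl p (u t (y + δ))) _ x :=
        (sol.hnl t (x + δ)).comp_add_const x δ
      exact (h1.sub (sol.hnl t x)).div_const δ)
    (fun t x => by
      rw [sol.sm.dt_sh, sol.sm.dx_sh, sol.sm.dx.dx_sh, sol.sm.dx.dx.dx_sh]
      unfold sh
      beta_reduce
      rw [← sol.pde, ← sol.pde]; ring) h.le iα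
    (by rw [sol.sm.dx_sh]; exact ivvx.const_mul (-2)) iγ ixa ixb
  have ile : ∫ q : ℝ × ℝ, (2 * sh δ (dx u) q.1 q.2 ^ 2) ∂(slab a b) ≤
      ∫ q : ℝ × ℝ, (-(-(3 * dx (sh δ u) q.1 q.2 ^ 2 + 2 * (sh δ u q.1 q.2 * g q.1 q.2)) +
        q.2 * (-2 * (dx (sh δ u) q.1 q.2 * g q.1 q.2))) + (1 + L ^ 2) *
          ((1 + q.2 ^ 2) * sh δ u q.1 q.2 ^ 2)) ∂(slab a b) := by
    refine integral_mono_ae (ivx.const_mul 2) ((iα.add iγ).neg.add (iv.const_mul (1 + L ^ 2))) ?_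
    filter_upwards [slab_ae a b] with q hq
    rw [sol.sm.dx_sh]
    have h1 := gle q hq
    have h2 : (1 + q.2 ^ 2) * g q.1 q.2 ^ 2 ≤ L ^ 2 * ((1 + q.2 ^ 2) * sh δ u q.1 q.2 ^ 2) := by
      nlinarith [sq_nonneg q.2]
    have h3 : sh δ u q.1 q.2 ^ 2 ≤ (1 + q.2 ^ 2) * sh δ u q.1 q.2 ^ 2 := by
      nlinarith [mul_nonneg (sq_nonneg q.2) (sq_nonneg (sh δ u q.1 q.2))]
    nlinarith [sq_nonneg (sh δ u q.1 q.2 + g q.1 q.2),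
      sq_nonneg (sh δ (dx u) q.1 q.2 + q.2 * g q.1 q.2)]
  rw [integral_add (by exact (iα.add iγ).neg) (iv.const_mul _), integral_neg, ← key,
    integral_const_mul, integral_const_mul] at ile
  have := abs_le.1 bxa
  have := abs_le.1 bxb
  have hmul : (1 + L ^ 2) * ∫ q : ℝ × ℝ, (1 + q.2 ^ 2) * sh δ u q.1 q.2 ^ 2 ∂(slab a b) ≤
    (1 + L ^ 2) * (3 * ∫ q : ℝ × ℝ, (1 + q.2 ^ 2) * dx u q.1 q.2 ^ 2 ∂(slab a b)) :=
    mul_le_mul_of_nonneg_left bv (by positivity)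
  linarith

theorem Bd.iuxx (h : Bd p u a b N) :
    Integrable (fun q : ℝ × ℝ => dx (dx u) q.1 q.2 ^ 2) (slab a b) := by
  have hn : ∀ n : ℕ, 0 < 1 / ((n:ℝ) + 1) ∧ 1 / ((n:ℝ) + 1) ≤ 1 := fun n =>
    ⟨by positivity, by rw [div_le_one (by positivity)]; linarith [n.cast_nonneg (α := ℝ)]⟩
  refine fatou_int (f := fun n (q : ℝ × ℝ) => sh (1 / ((n:ℝ) + 1)) (dx u) q.1 q.2 ^ 2)
    (fun n => sh_int h.sol.sm.dx.cn a b _ h.iux) (fun n q => sq_nonneg _)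
    (1 / 2 * (3 * (∫ x, (1 + x ^ 2) * dx u a x ^ 2) + 3 * (∫ x, (1 + x ^ 2) * dx u b x ^ 2) +
      (1 + (p * √(2 * N) ^ (p - 1)) ^ 2) *
        (3 * ∫ q : ℝ × ℝ, (1 + q.2 ^ 2) * dx u q.1 q.2 ^ 2 ∂(slab a b))))
    (fun n => h.sh_bound (hn n).1 (hn n).2) (fun q => ?_)
  apply Tendsto.pow
  have h1 := (h.sol.sm.dx.hx q.1 q.2).tendsto_slope_zero_right
  have h2 : Tendsto (fun n : ℕ => 1 / ((n:ℝ) + 1)) atTop (𝓝[>] 0) :=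
    tendsto_nhdsWithin_iff.2 ⟨tendsto_one_div_add_atTop_nhds_zero_nat,
      Eventually.of_forall fun n => (hn n).1⟩
  refine (h1.comp h2).congr (fun n => ?_)
  simp only [Function.comp, sh, smul_eq_mul]
  rw [div_eq_inv_mul (dx u q.1 _ - _)]

end

end GKdV

namespace GKdV

open Filter Topology

/-- abstract Baire category argument: local boundedness -/
theorem baire_const {K : ℝ → ℝ} (hcl : ∀ n : ℕ, IsClosed {t | K t ≤ n})
    (hco : ∀ a b N : ℝ, a ≤ b → (∀ t ∈ Set.Icc a b, K t ≤ N) → K b = K a) (a b : ℝ) : K a = K b := by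
  set U : Set ℝ := {t | ∃ N : ℝ, ∀ᶠ s in 𝓝 t, K s ≤ N} with hU
  have oU : IsOpen U := by
    rw [isOpen_iff_mem_nhds]
    rintro t ⟨N, hN⟩
    filter_upwards [eventually_eventually_nhds.2 hN] with s hs using ⟨N, hs⟩
  have f1 : ∀ a b, a ≤ b → Set.Icc a b ⊆ U → K b = K a := by
    intro a b hab hs
    have : ∃ N : ℝ, ∀ t ∈ Set.Icc a b, K t ≤ N := by
      refine isCompact_Icc.induction_on (p := fun s => ∃ N : ℝ, ∀ t ∈ s, K t ≤ N) ⟨0, by simp⟩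
        ?_ ?_ ?_
      · rintro s t hst ⟨N, h⟩; exact ⟨N, fun x hx => h x (hst hx)⟩
      · rintro s t ⟨N, h⟩ ⟨N', h'⟩
        refine ⟨max N N', ?_⟩
        rintro x (hx | hx)
        · exact (h x hx).trans (le_max_left _ _)
        · exact (h' x hx).trans (le_max_right _ _)
      · intro x hx
        obtain ⟨N, hN⟩ := hs hx
        exact ⟨_, mem_nhdsWithin_of_mem_nhds hN, N, fun t ht => ht⟩
    obtain ⟨N, hN⟩ := this
    exact hco a b N hab hN
  have f2 : ∀ a b, a < b → Set.Ico a b ⊆ U → K a = K b := by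
    intro a b hab hs
    obtain ⟨n, hn⟩ := exists_nat_ge (K a)
    have h1 : Set.Ico a b ⊆ {t | K t ≤ n} := by
      intro t ht
      have := f1 a t ht.1 (fun x hx => hs ⟨hx.1, hx.2.trans_lt ht.2⟩)
      show K t ≤ n
      rw [this]; exact hn
    have h2 := closure_minimal h1 (hcl n)
    rw [closure_Ico hab.ne] at h2
    exact (hco a b n hab.le h2).symm
  have f3 : ∀ a b, a < b → Set.Ioc a b ⊆ U → K a = K b := by
    intro a b hab hs
    obtain ⟨n, hn⟩ := exists_nat_ge (K b)
    have h1 : Set.Ioc a b ⊆ {t | K t ≤ n} := by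
      intro t ht
      have := f1 t b ht.2 (fun x hx => hs ⟨ht.1.trans_le hx.1, hx.2⟩)
      show K t ≤ n
      rw [← this]; exact hn
    have h2 := closure_minimal h1 (hcl n)
    rw [closure_Ioc hab.ne] at h2
    exact (hco a b n hab.le h2).symm
  have hUu : U = Set.univ := by
    by_contra hne
    have hZ : (Uᶜ).Nonempty := Set.nonempty_compl.2 hne
    have cZ : IsClosed Uᶜ := oU.isClosed_compl
    have : Nonempty (Uᶜ : Set ℝ) := hZ.to_subtype
    have : CompleteSpace (Uᶜ : Set ℝ) := cZ.completeSpace_coe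
    obtain ⟨n, z0, hz0⟩ := nonempty_interior_of_iUnion_of_closed
      (f := fun n : ℕ => {z : (Uᶜ : Set ℝ) | K z ≤ n})
      (fun n => (hcl n).preimage continuous_subtype_val) (by
        rw [Set.eq_univ_iff_forall]; intro z
        obtain ⟨n, hn⟩ := exists_nat_ge (K z)
        exact Set.mem_iUnion.2 ⟨n, hn⟩)
    rw [mem_interior_iff_mem_nhds, Metric.mem_nhds_iff] at hz0
    obtain ⟨r, hr, hb⟩ := hz0
    have hb' : ∀ z ∈ Uᶜ, |z - z0| < r → K z ≤ n := fun z hz hzr =>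
      hb (show (⟨z, hz⟩ : (Uᶜ : Set ℝ)) ∈ Metric.ball z0 r from hzr)
    apply z0.2
    refine ⟨n, ?_⟩
    filter_upwards [Metric.ball_mem_nhds (z0 : ℝ) hr] with t ht
    have ht' : |t - z0| < r := ht
    by_cases htU : t ∈ U
    swap
    · exact hb' t htU ht'
    rcases lt_trichotomy t z0 with hlt | heq | hgt
    · obtain ⟨z, hz, hmin⟩ := (isCompact_Icc.inter_left cZ : IsCompact (Uᶜ ∩ Set.Icc t z0)).exists_isLeast
        ⟨z0, z0.2, hlt.le, le_rfl⟩
      have htz : t < z := lt_of_le_of_ne hz.2.1 (by rintro rfl; exact hz.1 htU)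
      rw [f2 t z htz (fun x hx => by
        by_contra hx'
        exact absurd (hmin ⟨hx', hx.1, hx.2.le.trans hz.2.2⟩) (not_le.2 hx.2))]
      apply hb' z hz.1
      rw [abs_lt] at ht' ⊢
      constructor <;> linarith [hz.2.2]
    · exact absurd (heq ▸ htU) z0.2
    · obtain ⟨z, hz, hmin⟩ := (isCompact_Icc.inter_left cZ : IsCompact (Uᶜ ∩ Set.Icc z0 t)).exists_isGreatest
        ⟨z0, z0.2, le_rfl, hgt.le⟩
      have htz : z < t := lt_of_le_of_ne hz.2.2 (by rintro rfl; exact hz.1 htU)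
      rw [← f3 z t htz (fun x hx => by
        by_contra hx'
        exact absurd (hmin ⟨hx', hz.2.1.trans hx.1.le, hx.2⟩) (not_le.2 hx.1))]
      apply hb' z hz.1
      rw [abs_lt] at ht' ⊢
      constructor <;> linarith [hz.2.1]
  rcases le_total a b with h | h
  · exact (f1 a b h (by simp [hUu])).symm
  · exact f1 b a h (by simp [hUu])

section
variable {p : ℝ} {u : ℝ → ℝ → ℝ} {a b N : ℝ}

lemma Bd.ieα (h : Bd p u a b N) : Integrable (fun q : ℝ × ℝ => eα p u q.1 q.2) (slab a b) :=
  ((slab_mul h.sol.sm.dx.dx.cn h.sol.cnl h.iuxx h.inl).const_mul 2).sub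
    ((h.iuxx.const_mul (3 / 2)).add (h.inl.const_mul (1 / 2)))

lemma Bd.ieβ (h : Bd p u a b N) : Integrable (fun q : ℝ × ℝ => eβ p u q.1 q.2) (slab a b) := by
  refine ((slab_mul h.sol.sm.dx.cn h.sol.cnl h.iux h.inl).sub
    (slab_mul h.sol.sm.dx.cn h.sol.sm.dx.dx.cn h.iux h.iuxx)).congr ?_
  filter_upwards with q
  simp only [Pi.sub_apply, eβ]; ring

lemma Bd.energy_const (h : Bd p u a b N) : ∫ x, en p u b x = ∫ x, en p u a x := by
  have := h.sol.energy h.le (φ := fun _ => 1) (φ' := fun _ => 0) (φ'' := fun _ => 0)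
    (fun x => hasDerivAt_const x 1) (fun x => hasDerivAt_const x 0) continuous_const
    (fun _ => 1) 1 (by simp) (by simp) (by simp) (by simpa using h.ieα) (by simpa using h.ieβ)
    (by simpa using h.sol.inten1 a) (by simpa using h.sol.inten1 b)
  simp at this
  linarith

lemma Bd.X_id (h : Bd p u a b N) :
    (∫ x, x * u b x ^ 2) - ∫ x, x * u a x ^ 2 = ∫ q, mα p u q.1 q.2 ∂(slab a b) := by
  have hb : ∀ x : ℝ, |x| ≤ 1 * (1 + |x|) ^ 1 := fun x => by simp
  have := h.sol.mass h.le (φ := fun x => x) (φ' := fun _ => 1) (φ'' := fun _ => 0)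
    (fun x => hasDerivAt_id x) (fun x => hasDerivAt_const x 1) continuous_const
    (fun _ => 1) 1 (by simp) (by simp) (by simp) (by simpa using h.imα) (by simpa using h.imβ)
    (h.sol.sch.intsq a _ continuous_id 1 1 hb) (h.sol.sch.intsq b _ continuous_id 1 1 hb)
  simpa using this

lemma Bd.P_id (h : Bd p u a b N) :
    (∫ x, x * en p u b x) - ∫ x, x * en p u a x = ∫ q, eα p u q.1 q.2 ∂(slab a b) := by
  have hb : ∀ x : ℝ, |x| ≤ 1 * (1 + |x|) ^ 1 := fun x => by simp
  have := h.sol.energy h.le (φ := fun x => x) (φ' := fun _ => 1) (φ'' := fun _ => 0)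
    (fun x => hasDerivAt_id x) (fun x => hasDerivAt_const x 1) continuous_const
    (fun _ => 1) 1 (by simp) (by simp) (by simp) (by simpa using h.ieα) (by simpa using h.ieβ)
    (h.sol.inten a _ continuous_id 1 1 hb) (h.sol.inten b _ continuous_id 1 1 hb)
  simpa using this

lemma Bd.wα (h : Bd p u a b N) :
    Integrable (fun q : ℝ × ℝ => (1 + |q.2|) * mα p u q.1 q.2) (slab a b) := by
  refine ((h.kato.const_mul (2 * (3 + 2 * p / (p + 1))))).mono'
    (Continuous.aestronglyMeasurable (Continuous.mul (by fun_prop) h.sol.cmα)) ?_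
  filter_upwards with q
  have hp := h.sol.hp
  have h1 := pw_nonneg p (u q.1 q.2)
  have h2 : 0 ≤ 2 * p / (p + 1) := by positivity
  rw [Real.norm_eq_abs, abs_mul, abs_of_nonneg (by positivity : 0 ≤ 1 + |q.2|)]
  unfold mα
  rw [abs_neg, abs_of_nonneg
    (by positivity : 0 ≤ 3 * dx u q.1 q.2 ^ 2 + 2 * p / (p + 1) * pw p (u q.1 q.2))]
  have h3 : 1 + |q.2| ≤ 2 * (1 + q.2 ^ 2) := by
    rw [← sq_abs q.2]; nlinarith [sq_nonneg (|q.2| - 1), abs_nonneg q.2]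
  have h4 : 3 * dx u q.1 q.2 ^ 2 + 2 * p / (p + 1) * pw p (u q.1 q.2) ≤
      (3 + 2 * p / (p + 1)) * (dx u q.1 q.2 ^ 2 + pw p (u q.1 q.2)) := by
    nlinarith [mul_nonneg h2 (sq_nonneg (dx u q.1 q.2))]
  calc (1 + |q.2|) * (3 * dx u q.1 q.2 ^ 2 + 2 * p / (p + 1) * pw p (u q.1 q.2))
      ≤ (2 * (1 + q.2 ^ 2)) * ((3 + 2 * p / (p + 1)) * (dx u q.1 q.2 ^ 2 + pw p (u q.1 q.2))) :=
        mul_le_mul h3 h4 (by positivity) (by positivity)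
    _ = _ := by ring

lemma Bd.wβ (h : Bd p u a b N) :
    Integrable (fun q : ℝ × ℝ => (1 + |q.2|) * mβ u q.1 q.2) (slab a b) := by
  refine ((h.iu.add (h.katox.const_mul 2))).mono'
    (Continuous.aestronglyMeasurable (Continuous.mul (by fun_prop) h.sol.cmβ)) ?_
  filter_upwards with q
  simp only [Pi.add_apply]
  rw [Real.norm_eq_abs]
  unfold mβ
  have h3 : (1 + |q.2|) ^ 2 ≤ 2 * (1 + q.2 ^ 2) := by
    rw [← sq_abs q.2]; nlinarith [sq_nonneg (|q.2| - 1)]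
  have h4 := mul_le_mul_of_nonneg_right h3 (sq_nonneg (dx u q.1 q.2))
  rw [abs_le]
  constructor
  · nlinarith [sq_nonneg (u q.1 q.2 - (1 + |q.2|) * dx u q.1 q.2)]
  · nlinarith [sq_nonneg (u q.1 q.2 + (1 + |q.2|) * dx u q.1 q.2)]

lemma poly_bd (c x : ℝ) : |(x - c) ^ 2| ≤ ((1 + |c|) ^ 2) * (1 + |x|) ^ 2 := by
  rw [abs_of_nonneg (sq_nonneg _), ← mul_pow]
  apply sq_le_sq'
  · nlinarith [abs_nonneg x, abs_nonneg c, neg_abs_le x, le_abs_self c,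
      mul_nonneg (abs_nonneg x) (abs_nonneg c)]
  · nlinarith [abs_nonneg x, abs_nonneg c, neg_abs_le c, le_abs_self x,
      mul_nonneg (abs_nonneg x) (abs_nonneg c)]

lemma poly_bd1 (c x : ℝ) : |x - c| ≤ (1 + |c|) * (1 + |x|) ^ 1 := by
  have := abs_sub x c
  nlinarith [abs_nonneg x, abs_nonneg c, mul_nonneg (abs_nonneg x) (abs_nonneg c)]

lemma Bd.V_id (h : Bd p u a b N) (c : ℝ) :
    (∫ x, (x - c) ^ 2 * u b x ^ 2) - ∫ x, (x - c) ^ 2 * u a x ^ 2 =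
      ∫ q : ℝ × ℝ, (2 * (q.2 - c) * mα p u q.1 q.2 + 2 * mβ u q.1 q.2) ∂(slab a b) := by
  have hc : Continuous (fun x : ℝ => (x - c) ^ 2) := by fun_prop
  have := h.sol.mass h.le (φ := fun x => (x - c) ^ 2) (φ' := fun x => 2 * (x - c))
    (φ'' := fun _ => 2)
    (fun x => (((hasDerivAt_id x).sub_const c).pow 2).congr_deriv (by simp))
    (fun x => (((hasDerivAt_id x).sub_const c).const_mul 2).congr_deriv (by simp)) continuous_const
    (fun x => 1 + |x|) (2 * (1 + |c|) ^ 2) (fun x => by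
      have := poly_bd c x
      have h0 : 0 ≤ ((1 + |c|) ^ 2) * (1 + |x|) ^ 2 := by positivity
      nlinarith)
      (fun x => by
        have := poly_bd1 c x
        rw [abs_mul, abs_two]
        have h0 : 0 ≤ (1 + |c|) * |c| * (1 + |x|) := by positivity
        nlinarith) (fun x => by
        rw [abs_two]
        nlinarith [abs_nonneg x, abs_nonneg c, mul_nonneg (abs_nonneg x) (sq_nonneg (1 + |c|))])
    h.wα h.wβ
    (h.sol.sch.intsq a _ hc _ 2 (poly_bd c)) (h.sol.sch.intsq b _ hc _ 2 (poly_bd c))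
  exact this

lemma Sol.KK_closed (h : Sol p u) (n : ℝ) : IsClosed {t | KK p u t ≤ n} := by
  set F : ℝ → ℝ → ℝ := fun t x => u t x ^ 2 + en p u t x with hF
  have cF : Cn F := h.sm.cn.sq.add h.cen
  have F0 : ∀ t x, 0 ≤ F t x := fun t x => by
    have := h.en_nonneg t x
    simp only [hF]; positivity
  have iF : ∀ t, Integrable (F t) := fun t => (h.sch.intsq1 t).add (h.inten1 t)
  have e : {t | KK p u t ≤ n} = ⋂ R : ℕ, {t | ∫ x in (-(R:ℝ))..R, F t x ≤ n} := by
    ext t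
    simp only [Set.mem_ofPred_eq, Set.mem_iInter]
    constructor
    · intro ht R
      refine le_trans ?_ ht
      rw [intervalIntegral.integral_of_le (by linarith [R.cast_nonneg (α := ℝ)])]
      exact setIntegral_le_integral (iF t) (Eventually.of_forall (F0 t))
    · intro ht
      have := intervalIntegral_tendsto_integral (iF t)
        (tendsto_neg_atTop_atBot.comp tendsto_natCast_atTop_atTop) tendsto_natCast_atTop_atTop
      exact le_of_tendsto' this ht
  rw [e]
  refine isClosed_iInter fun R => isClosed_le ?_ continuous_const
  exact intervalIntegral.continuous_parametric_intervalIntegral_of_continuous'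
    (show Continuous (Function.uncurry F) from cF) _ _

theorem Sol.KK_const (h : Sol p u) (a b : ℝ) : KK p u a = KK p u b := by
  refine baire_const (fun n => h.KK_closed n) (fun a b N hab hN => ?_) a b
  have B : Bd p u a b N := ⟨h, hab, hN⟩
  rw [h.KK_eq, h.KK_eq, B.mass_const, B.energy_const]

theorem Sol.Bd (h : Sol p u) {a b : ℝ} (hab : a ≤ b) : GKdV.Bd p u a b (KK p u 0) :=
  ⟨h, hab, fun t _ => (h.KK_const t 0).le⟩

lemma Sol.mass_eq (h : Sol p u) (t : ℝ) : ∫ x, u t x ^ 2 = ∫ x, u 0 x ^ 2 := by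
  rcases le_total t 0 with ht | ht
  · exact (h.Bd ht).mass_const.symm
  · exact (h.Bd ht).mass_const

lemma Sol.energy_eq (h : Sol p u) (t : ℝ) : ∫ x, en p u t x = ∫ x, en p u 0 x := by
  rcases le_total t 0 with ht | ht
  · exact (h.Bd ht).energy_const.symm
  · exact (h.Bd ht).energy_const

end

lemma slab_le {f : ℝ × ℝ → ℝ} {a b c : ℝ} (hab : a ≤ b) (hf : Integrable f (slab a b))
    (h : ∀ t ∈ Set.Icc a b, ∫ x, f (t, x) ≤ c) : ∫ q, f q ∂(slab a b) ≤ c * (b - a) := by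
  unfold slab at hf ⊢
  rw [integral_prod _ hf]
  calc ∫ t in Set.Ioc a b, ∫ x, f (t, x) ≤ ∫ t in Set.Ioc a b, c := by
        refine setIntegral_mono_on hf.integral_prod_left (by simp) measurableSet_Ioc
          (fun t ht => h t (Set.Ioc_subset_Icc_self ht))
    _ = c * (b - a) := by simp [hab]; ring

lemma slab_ge {f : ℝ × ℝ → ℝ} {a b c : ℝ} (hab : a ≤ b) (hf : Integrable f (slab a b))
    (h : ∀ t ∈ Set.Icc a b, c ≤ ∫ x, f (t, x)) : c * (b - a) ≤ ∫ q, f q ∂(slab a b) := by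
  have := slab_le (c := -c) hab hf.neg (fun t ht => by
    simp only [Pi.neg_apply]
    rw [integral_neg]; linarith [h t ht])
  simp only [Pi.neg_apply] at this
  rw [integral_neg] at this; linarith

end GKdV

namespace GKdV

open Filter Topology

lemma mul_int {f g : ℝ → ℝ} (cf : Continuous f) (cg : Continuous g)
    (hf : Integrable (fun x => f x ^ 2)) (hg : Integrable (fun x => g x ^ 2)) :
    Integrable (fun x => f x * g x) := by
  refine (hf.add hg).mono' (cf.mul cg).aestronglyMeasurable ?_
  filter_upwards with x
  simp only [Pi.add_apply, Real.norm_eq_abs]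
  rw [abs_le]
  constructor <;> nlinarith [sq_nonneg (f x + g x), sq_nonneg (f x - g x)]

lemma cs_int {f g : ℝ → ℝ} (cf : Continuous f) (cg : Continuous g)
    (hf : Integrable (fun x => f x ^ 2)) (hg : Integrable (fun x => g x ^ 2))
    (hpos : 0 < ∫ x, f x ^ 2) :
    (∫ x, f x * g x) ^ 2 ≤ (∫ x, f x ^ 2) * ∫ x, g x ^ 2 := by
  set F := ∫ x, f x ^ 2 with hF
  set k := ∫ x, f x * g x with hk
  have ifg := mul_int cf cg hf hg
  have h0 : 0 ≤ ∫ x, (F * g x - k * f x) ^ 2 := integral_nonneg fun x => sq_nonneg _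
  have e : ∀ x, (F * g x - k * f x) ^ 2 =
      F ^ 2 * g x ^ 2 - 2 * F * k * (f x * g x) + k ^ 2 * f x ^ 2 := fun x => by ring
  simp_rw [e] at h0
  rw [integral_add (by exact (hg.const_mul _).sub (ifg.const_mul _)) (hf.const_mul _),
    integral_sub (hg.const_mul _) (ifg.const_mul _), integral_const_mul, integral_const_mul,
    integral_const_mul, ← hF, ← hk] at h0
  by_contra hc
  push Not at hc
  nlinarith [mul_pos hpos (sub_pos.2 hc)]

section
variable {p : ℝ} {u : ℝ → ℝ → ℝ}

lemma Sol.intnl (h : Sol p u) (t : ℝ) : Integrable (fun x => nl p (u t x) ^ 2) := by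
  obtain ⟨S, hS⟩ := h.sch.bdd t
  refine ((h.sch.intsq1 t).const_mul ((S ^ (p - 1)) ^ 2)).mono'
    (Continuous.aestronglyMeasurable ((h.cnl.slice t).pow 2)) ?_
  filter_upwards with x
  rw [Real.norm_eq_abs, abs_of_nonneg (sq_nonneg _)]
  exact nl_sq_le h.hp (hS x)

lemma Sol.i_uux (h : Sol p u) (t : ℝ) : Integrable (fun x => u t x * dx u t x) :=
  mul_int (h.sm.cn.slice t) (h.sm.dx.cn.slice t) (h.sch.intsq1 t) (h.sch.dx.intsq1 t)

lemma Sol.i_uuxx (h : Sol p u) (t : ℝ) : Integrable (fun x => u t x * dx (dx u) t x) :=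
  mul_int (h.sm.cn.slice t) (h.sm.dx.dx.cn.slice t) (h.sch.intsq1 t) (h.sch.dx.dx.intsq1 t)

lemma Sol.i_uxxnl (h : Sol p u) (t : ℝ) : Integrable (fun x => dx (dx u) t x * nl p (u t x)) :=
  mul_int (h.sm.dx.dx.cn.slice t) (h.cnl.slice t) (h.sch.dx.dx.intsq1 t) (h.intnl t)

lemma Sol.int_uuxx (h : Sol p u) (t : ℝ) :
    ∫ x, u t x * dx (dx u) t x = - ∫ x, dx u t x ^ 2 := by
  have e := integral_eq_zero_of_hasDerivAt_of_integrable (f := fun x => u t x * dx u t x)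
    (f' := fun x => dx u t x ^ 2 + u t x * dx (dx u) t x)
    (fun x => ((h.sm.hx t x).mul (h.sm.dx.hx t x)).congr_deriv (by ring))
    ((h.sch.dx.intsq1 t).add (h.i_uuxx t)) (h.i_uux t)
  rw [integral_add (h.sch.dx.intsq1 t) (h.i_uuxx t)] at e
  linarith

lemma Sol.int_mβ (h : Sol p u) (t : ℝ) : ∫ x, mβ u t x = 0 := by
  refine integral_eq_zero_of_hasDerivAt_of_integrable (f := fun x => -(u t x ^ 2))
    (fun x => ((h.sm.hx t x).pow 2).neg.congr_deriv (by unfold mβ; push_cast; ring))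
    ((h.i_uux t).const_mul (-2)) (h.sch.intsq1 t).neg

lemma Sol.int_uxxnl (h : Sol p u) (t : ℝ) : ∫ x, dx (dx u) t x * nl p (u t x) ≤ 0 := by
  obtain ⟨S, hS⟩ := h.sch.bdd t
  have hp := h.hp
  have hpow : Continuous (fun y : ℝ => |y| ^ (p - 1)) :=
    continuous_abs.rpow_const (fun _ => Or.inr (by linarith))
  have i1 : Integrable (fun x => p * |u t x| ^ (p - 1) * dx u t x ^ 2) := by
    refine ((h.sch.dx.intsq1 t).const_mul (p * S ^ (p - 1))).mono'
      (Continuous.aestronglyMeasurable ?_) ?_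
    · exact (continuous_const.mul (hpow.comp (h.sm.cn.slice t))).mul ((h.sm.dx.cn.slice t).pow 2)
    · filter_upwards with x
      have h2 := Real.rpow_le_rpow (abs_nonneg (u t x)) (hS x) (by linarith : 0 ≤ p - 1)
      have h0 : 0 ≤ |u t x| ^ (p - 1) := Real.rpow_nonneg (abs_nonneg _) _
      rw [Real.norm_eq_abs, abs_of_nonneg (by positivity)]
      gcongr
  have e := integral_eq_zero_of_hasDerivAt_of_integrable (f := fun x => dx u t x * nl p (u t x))
    (f' := fun x => dx (dx u) t x * nl p (u t x) + p * |u t x| ^ (p - 1) * dx u t x ^ 2)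
    (fun x => ((h.sm.dx.hx t x).mul (h.hnl t x)).congr_deriv (by ring))
    ((h.i_uxxnl t).add i1)
    (mul_int (h.sm.dx.cn.slice t) (h.cnl.slice t) (h.sch.dx.intsq1 t) (h.intnl t))
  rw [integral_add (h.i_uxxnl t) i1] at e
  have : 0 ≤ ∫ x, p * |u t x| ^ (p - 1) * dx u t x ^ 2 := integral_nonneg fun x => by positivity
  linarith

lemma Sol.int_mα (h : Sol p u) (t : ℝ) : ∫ x, mα p u t x =
    -(3 * (∫ x, dx u t x ^ 2) + 2 * p / (p + 1) * ∫ x, pw p (u t x)) := by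
  unfold mα
  rw [integral_neg, integral_add ((h.sch.dx.intsq1 t).const_mul _) ((h.intpw1 t).const_mul _),
    integral_const_mul, integral_const_mul]

lemma Sol.int_en (h : Sol p u) (t : ℝ) : ∫ x, en p u t x =
    1 / 2 * (∫ x, dx u t x ^ 2) + 1 / (p + 1) * ∫ x, pw p (u t x) := by
  unfold en
  rw [integral_add ((h.sch.dx.intsq1 t).const_mul _) ((h.intpw1 t).const_mul _),
    integral_const_mul, integral_const_mul]

lemma Sol.int_eα (h : Sol p u) (t : ℝ) (hM : 0 < ∫ x, u t x ^ 2) :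
    1 / 2 * (√3 * (∫ x, dx u t x ^ 2) + ∫ x, pw p (u t x)) ^ 2 ≤
      (∫ x, u t x ^ 2) * (- ∫ x, eα p u t x) := by
  have cY : Continuous (fun x => √3 * dx (dx u) t x - nl p (u t x)) :=
    (continuous_const.mul (h.sm.dx.dx.cn.slice t)).sub (h.cnl.slice t)
  have s3 : √3 * √3 = 3 := Real.mul_self_sqrt (by norm_num)
  have eY : ∀ x, (√3 * dx (dx u) t x - nl p (u t x)) ^ 2 =
      3 * dx (dx u) t x ^ 2 + nl p (u t x) ^ 2 - 2 * √3 * (dx (dx u) t x * nl p (u t x)) := by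
    intro x
    have : (√3 * dx (dx u) t x - nl p (u t x)) ^ 2 = (√3 * √3) * dx (dx u) t x ^ 2 +
      nl p (u t x) ^ 2 - 2 * √3 * (dx (dx u) t x * nl p (u t x)) := by ring
    rw [this, s3]
  have iA := h.sch.dx.dx.intsq1 t
  have iB := h.intnl t
  have iC := h.i_uxxnl t
  have iY : Integrable (fun x => (√3 * dx (dx u) t x - nl p (u t x)) ^ 2) := by
    simp_rw [eY]
    exact ((iA.const_mul 3).add iB).sub (iC.const_mul _)
  have intY : ∫ x, (√3 * dx (dx u) t x - nl p (u t x)) ^ 2 =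
      3 * (∫ x, dx (dx u) t x ^ 2) + (∫ x, nl p (u t x) ^ 2) -
        2 * √3 * ∫ x, dx (dx u) t x * nl p (u t x) := by
    simp_rw [eY]
    rw [integral_sub (by exact (iA.const_mul 3).add iB) (iC.const_mul _),
      integral_add (iA.const_mul 3) iB, integral_const_mul, integral_const_mul]
  have inte : ∫ x, eα p u t x = 2 * (∫ x, dx (dx u) t x * nl p (u t x)) -
      (3 / 2 * (∫ x, dx (dx u) t x ^ 2) + 1 / 2 * ∫ x, nl p (u t x) ^ 2) := by
    unfold eα
    rw [integral_sub (iC.const_mul 2) (by exact (iA.const_mul _).add (iB.const_mul _)),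
      integral_add (iA.const_mul _) (iB.const_mul _), integral_const_mul, integral_const_mul,
      integral_const_mul]
  have iuY : ∫ x, u t x * (√3 * dx (dx u) t x - nl p (u t x)) =
      -(√3 * (∫ x, dx u t x ^ 2) + ∫ x, pw p (u t x)) := by
    have : ∀ x, u t x * (√3 * dx (dx u) t x - nl p (u t x)) =
        √3 * (u t x * dx (dx u) t x) - pw p (u t x) := fun x => by
      rw [← mul_nl h.hp]; ring
    simp_rw [this]
    rw [integral_sub ((h.i_uuxx t).const_mul _) (h.intpw1 t), integral_const_mul, h.int_uuxx]
    ring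
  have cs := cs_int (h.sm.cn.slice t) cY (h.sch.intsq1 t) iY hM
  rw [iuY, neg_sq] at cs
  have neg := h.int_uxxnl t
  have s32 : √3 ≤ 2 := by
    rw [Real.sqrt_le_left (by norm_num)]; norm_num
  have : 1 / 2 * ∫ x, (√3 * dx (dx u) t x - nl p (u t x)) ^ 2 ≤ - ∫ x, eα p u t x := by
    rw [intY, inte]
    nlinarith [mul_nonneg (sub_nonneg.2 s32) (neg_nonneg.2 neg)]
  nlinarith [mul_le_mul_of_nonneg_left this hM.le]

/-- Tao's monotonicity inequality at a fixed time -/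
lemma Sol.tao (h : Sol p u) (hp3 : √3 ≤ p) (t : ℝ) (hM : 0 < ∫ x, u t x ^ 2) :
    (p - 1) ^ 2 / (2 * (p + 1) ^ 2) * (∫ x, pw p (u t x)) ^ 2 ≤
      (∫ x, en p u t x) * (∫ x, mα p u t x) - (∫ x, u t x ^ 2) * ∫ x, eα p u t x := by
  have h1 := h.int_eα t hM
  rw [h.int_mα, h.int_en]
  set a := ∫ x, dx u t x ^ 2 with ha
  set b := ∫ x, pw p (u t x) with hb
  have a0 : 0 ≤ a := integral_nonneg fun x => sq_nonneg _
  have b0 : 0 ≤ b := integral_nonneg fun x => pw_nonneg _ _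
  have hp := h.hp
  have hp1 : p + 1 ≠ 0 := by linarith
  have s3 : √3 ^ 2 = 3 := Real.sq_sqrt (by norm_num)
  have s31 : 1 < √3 := by
    rw [Real.lt_sqrt (by norm_num)]; norm_num
  have h2 : (p + 3) / (p + 1) ≤ √3 := by
    rw [div_le_iff₀ (by linarith)]; nlinarith
  have h3 : 1 / 2 * (√3 * a + b) ^ 2 -
      (1 / 2 * a + 1 / (p + 1) * b) * (3 * a + 2 * p / (p + 1) * b) =
      (√3 - (p + 3) / (p + 1)) * (a * b) + (p - 1) ^ 2 / (2 * (p + 1) ^ 2) * b ^ 2 := by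
    have : 1 / 2 * (√3 * a + b) ^ 2 = 1 / 2 * (√3 ^ 2 * a ^ 2 + 2 * √3 * (a * b) + b ^ 2) := by ring
    rw [this, s3]
    field_simp
    ring
  have h4 : 0 ≤ (√3 - (p + 3) / (p + 1)) * (a * b) :=
    mul_nonneg (sub_nonneg.2 h2) (mul_nonneg a0 b0)
  linarith

/-- decay hypothesis -/
def Decay (u : ℝ → ℝ → ℝ) (x₀ : ℝ → ℝ) (C ε : ℝ) : Prop := ∀ R : ℝ, 0 < R → ∀ t : ℝ,
      (∫ x in {x : ℝ | R < |x - x₀ t|}, (u t x) ^ 2) ≤ C / R ^ (2 + ε)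

lemma meas_tail (R c : ℝ) : MeasurableSet {x : ℝ | R < |x - c|} :=
  (isOpen_lt continuous_const (by fun_prop)).measurableSet

lemma Sol.b_lower (h : Sol p u) {x₀ : ℝ → ℝ} {C ε : ℝ} (hC : 0 < C) (hε : 0 < ε)
    (hd : Decay u x₀ C ε) (hM : 0 < ∫ x, u 0 x ^ 2) :
    ∃ b0 : ℝ, 0 < b0 ∧ ∀ t, b0 ≤ ∫ x, pw p (u t x) := by
  set M := ∫ x, u 0 x ^ 2 with hMdef
  obtain ⟨R, hR, hCR⟩ : ∃ R : ℝ, 0 < R ∧ C / R ^ (2 + ε) ≤ M / 2 := by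
    have h1 : Tendsto (fun R : ℝ => C / R ^ (2 + ε)) atTop (𝓝 0) :=
      (tendsto_rpow_atTop (by linarith)).const_div_atTop C
    have h2 := h1.eventually (ge_mem_nhds (show (0:ℝ) < M / 2 by linarith))
    obtain ⟨R, hR1, hR2⟩ := (h2.and (eventually_gt_atTop 0)).exists
    exact ⟨R, hR2, hR1⟩
  set l := √(M / (8 * R)) with hl
  have lpos : 0 < l := Real.sqrt_pos.2 (by positivity)
  have lsq : l ^ 2 = M / (8 * R) := Real.sq_sqrt (by positivity)
  have hp := h.hp
  have lp : 0 < l ^ (p - 1) := Real.rpow_pos_of_pos lpos _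
  refine ⟨l ^ (p - 1) * (M / 4), by positivity, fun t => ?_⟩
  have hpt : ∀ y : ℝ, l ^ (p - 1) * y ^ 2 ≤ l ^ (p - 1) * l ^ 2 + pw p y := by
    intro y
    rcases le_total |y| l with hy | hy
    · have : y ^ 2 ≤ l ^ 2 := by rw [← sq_abs y]; gcongr
      have := mul_le_mul_of_nonneg_left this lp.le
      linarith [pw_nonneg p y]
    · rw [pw_eq hp]
      have := Real.rpow_le_rpow lpos.le hy (by linarith : 0 ≤ p - 1)
      have := mul_le_mul_of_nonneg_right this (sq_nonneg y)
      have : 0 ≤ l ^ (p - 1) * l ^ 2 := by positivity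
      linarith
  have iu := h.sch.intsq1 t
  have ecompl : {x : ℝ | R < |x - x₀ t|}ᶜ = Set.Icc (x₀ t - R) (x₀ t + R) := by
    ext x
    simp only [Set.mem_compl_iff, Set.mem_ofPred_eq, not_lt, abs_le, Set.mem_Icc]
    constructor <;> rintro ⟨h1, h2⟩ <;> constructor <;> linarith
  have split := integral_add_compl (meas_tail R (x₀ t)) iu
  rw [ecompl, h.mass_eq t] at split
  have tail := hd R hR t
  have inn : l ^ (p - 1) * ∫ x in Set.Icc (x₀ t - R) (x₀ t + R), u t x ^ 2 ≤
      l ^ (p - 1) * l ^ 2 * (2 * R) + ∫ x, pw p (u t x) := by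
    rw [← integral_const_mul]
    calc ∫ x in Set.Icc (x₀ t - R) (x₀ t + R), l ^ (p - 1) * u t x ^ 2
        ≤ ∫ x in Set.Icc (x₀ t - R) (x₀ t + R), (l ^ (p - 1) * l ^ 2 + pw p (u t x)) :=
          integral_mono (iu.const_mul _).integrableOn
            ((integrable_const _).add (h.intpw1 t).integrableOn) (fun x => hpt _)
      _ = l ^ (p - 1) * l ^ 2 * (2 * R) + ∫ x in Set.Icc (x₀ t - R) (x₀ t + R), pw p (u t x) := by
          rw [integral_add (integrable_const _) (h.intpw1 t).integrableOn]
          congr 1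
          have e2 : x₀ t + R - (x₀ t - R) = 2 * R := by ring
          simp [e2, hR.le]; ring
      _ ≤ _ := by
          have := setIntegral_le_integral (s := Set.Icc (x₀ t - R) (x₀ t + R)) (h.intpw1 t)
            (Eventually.of_forall fun x => pw_nonneg _ _)
          linarith
  have hin : M / 2 ≤ ∫ x in Set.Icc (x₀ t - R) (x₀ t + R), u t x ^ 2 := by linarith
  have e3 : l ^ 2 * (2 * R) = M / 4 := by rw [lsq]; field_simp; norm_num
  have := mul_le_mul_of_nonneg_left hin lp.le
  rw [mul_assoc, e3] at inn
  linarith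

lemma Sol.second_moment (h : Sol p u) {x₀ : ℝ → ℝ} {C ε : ℝ} (hC : 0 < C) (hε : 0 < ε)
    (hd : Decay u x₀ C ε) :
    ∃ D : ℝ, ∀ t, ∫ x, (x - x₀ t) ^ 2 * u t x ^ 2 ≤ D := by
  set M := ∫ x, u 0 x ^ 2 with hMdef
  set r : ℝ := (2:ℝ) ^ (-ε) with hr
  have r0 : 0 < r := by positivity
  have r1 : r < 1 := Real.rpow_lt_one_of_one_lt_of_neg (by norm_num) (by linarith)
  refine ⟨M + 4 * C * (1 - r)⁻¹, fun t => ?_⟩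
  have iu := h.sch.intsq1 t
  have iV : Integrable (fun x => (x - x₀ t) ^ 2 * u t x ^ 2) :=
    h.sch.intsq t (fun x => (x - x₀ t) ^ 2) (by fun_prop) _ 2 (poly_bd (x₀ t))
  have cu := h.sm.cn.slice t
  set F : ℕ → ℝ → ℝ := fun n x => min ((x - x₀ t) ^ 2) (4 ^ n) * u t x ^ 2 with hF
  have cF : ∀ n, Continuous (F n) := fun n => by simp only [hF]; fun_prop
  have Fle : ∀ n x, ‖F n x‖ ≤ (x - x₀ t) ^ 2 * u t x ^ 2 := fun n x => by
    rw [Real.norm_eq_abs, abs_of_nonneg (by simp only [hF]; positivity)]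
    exact mul_le_mul_of_nonneg_right (min_le_left _ _) (sq_nonneg _)
  have iF : ∀ n, Integrable (F n) := fun n =>
    iV.mono' (cF n).aestronglyMeasurable (Eventually.of_forall (Fle n))
  have step : ∀ n, ∫ x, F (n + 1) x ≤ (∫ x, F n x) + 4 * C * r ^ n := by
    intro n
    have tail := hd (2 ^ n) (by positivity) t
    have hpt : ∀ x, F (n + 1) x ≤ F n x +
        4 ^ (n + 1) * ({x : ℝ | (2:ℝ) ^ n < |x - x₀ t|}.indicator (fun x => u t x ^ 2) x) := by
      intro x
      by_cases hx : (2:ℝ) ^ n < |x - x₀ t|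
      · rw [Set.indicator_of_mem (show x ∈ {x : ℝ | (2:ℝ) ^ n < |x - x₀ t|} from hx)]
        have h1 : F (n + 1) x ≤ 4 ^ (n + 1) * u t x ^ 2 :=
          mul_le_mul_of_nonneg_right (min_le_right _ _) (sq_nonneg _)
        have h2 : 0 ≤ F n x := by simp only [hF]; positivity
        linarith
      · rw [Set.indicator_of_notMem (show x ∉ {x : ℝ | (2:ℝ) ^ n < |x - x₀ t|} from hx)]
        have h1 : (x - x₀ t) ^ 2 ≤ 4 ^ n := by
          have : |x - x₀ t| ≤ 2 ^ n := not_lt.1 hx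
          calc (x - x₀ t) ^ 2 = |x - x₀ t| ^ 2 := (sq_abs _).symm
            _ ≤ (2 ^ n) ^ 2 := by gcongr
            _ = 4 ^ n := by rw [← pow_mul, mul_comm, pow_mul]; norm_num
        simp only [hF, mul_zero, add_zero]
        rw [min_eq_left h1]
        exact mul_le_mul_of_nonneg_right (min_le_left _ _) (sq_nonneg _)
    have i2 : Integrable (fun x => 4 ^ (n + 1) *
        ({x : ℝ | (2:ℝ) ^ n < |x - x₀ t|}.indicator (fun x => u t x ^ 2) x)) :=
      (iu.indicator (meas_tail _ _)).const_mul _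
    have h3 := integral_mono (iF (n + 1)) ((iF n).add i2) hpt
    simp only [Pi.add_apply] at h3
    rw [integral_add (iF n) i2, integral_const_mul, integral_indicator (meas_tail _ _)] at h3
    have h4 : (4:ℝ) ^ (n + 1) * (C / (2 ^ n) ^ (2 + ε)) = 4 * C * r ^ n := by
      have e1 : ((2:ℝ) ^ n) ^ (2 + ε) = 4 ^ n * ((2:ℝ) ^ ε) ^ n := by
        rw [Real.rpow_add (by positivity), Real.rpow_two, ← pow_mul, mul_comm n 2, pow_mul]
        norm_num
        rw [← Real.rpow_natCast, ← Real.rpow_natCast, ← Real.rpow_mul (by norm_num),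
          ← Real.rpow_mul (by norm_num), mul_comm]
      have e2 : r = ((2:ℝ) ^ ε)⁻¹ := by rw [hr, Real.rpow_neg (by norm_num)]
      rw [e1, e2, inv_pow, pow_succ]
      field_simp
    have h5 := mul_le_mul_of_nonneg_left tail (by positivity : (0:ℝ) ≤ 4 ^ (n + 1))
    rw [h4] at h5
    linarith
  have bound : ∀ n, ∫ x, F n x ≤ M + 4 * C * ∑ j ∈ Finset.range n, r ^ j := by
    intro n
    induction n with
    | zero =>
      simp only [Finset.range_zero, Finset.sum_empty, mul_zero, add_zero]
      rw [hMdef, ← h.mass_eq t]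
      refine integral_mono (iF 0) iu (fun x => ?_)
      have : F 0 x ≤ 4 ^ 0 * u t x ^ 2 :=
        mul_le_mul_of_nonneg_right (min_le_right _ _) (sq_nonneg _)
      simpa using this
    | succ n ih =>
      rw [Finset.sum_range_succ]
      linarith [step n]
  have geom : ∀ n, ∑ j ∈ Finset.range n, r ^ j ≤ (1 - r)⁻¹ := fun n => by
    rw [← tsum_geometric_of_lt_one r0.le r1]
    exact (summable_geometric_of_lt_one r0.le r1).sum_le_tsum _ (fun i _ => by positivity)
  have lim : Tendsto (fun n => ∫ x, F n x) atTop (𝓝 (∫ x, (x - x₀ t) ^ 2 * u t x ^ 2)) := by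
    refine tendsto_integral_of_dominated_convergence _ (fun n => (cF n).aestronglyMeasurable) iV
      (fun n => Eventually.of_forall (Fle n)) (Eventually.of_forall fun x => ?_)
    refine tendsto_const_nhds.congr' ?_
    have h4 := (tendsto_pow_atTop_atTop_of_one_lt (show (1:ℝ) < 4 by norm_num)).eventually_ge_atTop
      ((x - x₀ t) ^ 2)
    filter_upwards [h4] with n hn
    simp only [hF]; rw [min_eq_left hn]
  refine le_of_tendsto' lim fun n => (bound n).trans ?_
  have := mul_le_mul_of_nonneg_left (geom n) (by positivity : 0 ≤ 4 * C)
  linarith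

end

end GKdV

namespace GKdV

open Filter Topology

section
variable {p : ℝ} {u : ℝ → ℝ → ℝ}

lemma Sol.ix (h : Sol p u) (t : ℝ) : Integrable (fun x => x * u t x ^ 2) :=
  h.sch.intsq t _ continuous_id 1 1 (fun x => by simp)
lemma Sol.ixen (h : Sol p u) (t : ℝ) : Integrable (fun x => x * en p u t x) :=
  h.inten t _ continuous_id 1 1 (fun x => by simp)
lemma Sol.iV (h : Sol p u) (c t : ℝ) : Integrable (fun x => (x - c) ^ 2 * u t x ^ 2) :=
  h.sch.intsq t (fun x => (x - c) ^ 2) (by fun_prop) _ 2 (poly_bd c)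

lemma Sol.V_expand (h : Sol p u) (c t : ℝ) : ∫ x, (x - c) ^ 2 * u t x ^ 2 =
    (∫ x, (x - 0) ^ 2 * u t x ^ 2) - 2 * c * (∫ x, x * u t x ^ 2) + c ^ 2 * ∫ x, u t x ^ 2 := by
  have : ∀ x, (x - c) ^ 2 * u t x ^ 2 = (x - 0) ^ 2 * u t x ^ 2 - 2 * c * (x * u t x ^ 2) +
    c ^ 2 * u t x ^ 2 := fun x => by ring
  simp_rw [this]
  rw [integral_add (by exact (h.iV 0 t).sub ((h.ix t).const_mul _)) ((h.sch.intsq1 t).const_mul _),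
    integral_sub (h.iV 0 t) ((h.ix t).const_mul _), integral_const_mul, integral_const_mul]

/-- the virial derivative at a fixed time -/
lemma Sol.virial_slice (h : Sol p u) (c t : ℝ) :
    ∫ x, (2 * (x - c) * mα p u t x + 2 * mβ u t x) =
      -12 * ((∫ x, x * en p u t x) - c * ∫ x, en p u t x) +
        4 * (3 - p) / (p + 1) * ∫ x, (x - c) * pw p (u t x) := by
  have hp1 : p + 1 ≠ 0 := by have := h.hp; linarith
  have e : ∀ x, 2 * (x - c) * mα p u t x + 2 * mβ u t x =
      -12 * (x * en p u t x) + 12 * c * en p u t x +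
        4 * (3 - p) / (p + 1) * ((x - c) * pw p (u t x)) + 2 * mβ u t x := by
    intro x
    unfold mα en
    field_simp
    ring
  have i1 := (h.ixen t).const_mul (-12)
  have i2 := (h.inten1 t).const_mul (12 * c)
  have i3 := (h.intpw t (fun x => x - c) (by fun_prop) _ 1 (poly_bd1 c)).const_mul
    (4 * (3 - p) / (p + 1))
  have i4 : Integrable (fun x => 2 * mβ u t x) := ((h.i_uux t).const_mul (-2)).const_mul 2
  simp_rw [e]
  rw [integral_add (by exact (i1.add i2).add i3) i4, integral_add (by exact i1.add i2) i3,
    integral_add i1 i2, integral_const_mul, integral_const_mul, integral_const_mul,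
    integral_const_mul, h.int_mβ]
  ring

lemma Sol.abs_moment (h : Sol p u) (c t : ℝ) :
    |∫ x, (x - c) * pw p (u t x)| ≤ √(2 * KK p u 0) ^ (p - 1) *
      ((∫ x, u t x ^ 2) + ∫ x, (x - c) ^ 2 * u t x ^ 2) := by
  have hs : ∀ x, |u t x| ≤ √(2 * KK p u 0) := fun x =>
    (h.Bd (le_refl t)).sup ⟨le_rfl, le_rfl⟩ x
  rw [← integral_add (h.sch.intsq1 t) (h.iV c t), ← integral_const_mul]
  have i3 := (h.intpw t (fun x => x - c) (by fun_prop) _ 1 (poly_bd1 c))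
  refine abs_integral_le_integral_abs.trans (integral_mono i3.abs
    (((h.sch.intsq1 t).add (h.iV c t)).const_mul _) (fun x => ?_))
  show |(x - c) * pw p (u t x)| ≤ _
  rw [abs_mul, abs_of_nonneg (pw_nonneg p (u t x))]
  have h1 := pw_le h.hp (hs x)
  have h2 : |x - c| ≤ 1 + (x - c) ^ 2 := by
    rw [← sq_abs (x - c)]; nlinarith [sq_nonneg (|x - c| - 1)]
  calc |x - c| * pw p (u t x) ≤ (1 + (x - c) ^ 2) * (√(2 * KK p u 0) ^ (p - 1) * u t x ^ 2) :=
        mul_le_mul h2 h1 (pw_nonneg _ _) (by positivity)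
    _ = _ := by ring

theorem Sol.contra (h : Sol p u) (hp3 : √3 ≤ p) {x₀ : ℝ → ℝ} {C ε : ℝ} (hC : 0 < C) (hε : 0 < ε)
    (hd : Decay u x₀ C ε) (hM : 0 < ∫ x, u 0 x ^ 2) : False := by
  obtain ⟨b0, hb0, hb⟩ := h.b_lower hC hε hd hM
  obtain ⟨D, hD⟩ := h.second_moment hC hε hd
  have hp := h.hp
  set M := ∫ x, u 0 x ^ 2 with hMd
  set E := ∫ x, en p u 0 x with hEd
  have massM : ∀ t, ∫ x, u t x ^ 2 = M := h.mass_eq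
  have enE : ∀ t, ∫ x, en p u t x = E := h.energy_eq
  have E0 : 0 ≤ E := integral_nonneg fun x => h.en_nonneg 0 x
  set X : ℝ → ℝ := fun t => ∫ x, x * u t x ^ 2 with hX
  set P : ℝ → ℝ := fun t => ∫ x, x * en p u t x with hP
  set V : ℝ → ℝ → ℝ := fun c t => ∫ x, (x - c) ^ 2 * u t x ^ 2 with hV
  set κ := (p - 1) ^ 2 / (2 * (p + 1) ^ 2) * b0 ^ 2 with hκ
  have κ0 : 0 < κ := by
    have : 0 < p - 1 := by linarith
    positivity
  -- slices
  have hA : ∀ t, -((6 + 2 * p) * E) ≤ ∫ x, mα p u t x ∧ ∫ x, mα p u t x ≤ 0 := by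
    intro t
    have e1 := h.int_mα t
    have e2 := h.int_en t
    rw [enE] at e2
    have a0 : 0 ≤ ∫ x, dx u t x ^ 2 := integral_nonneg fun x => sq_nonneg _
    have q0 : 0 ≤ 1 / (p + 1) * ∫ x, pw p (u t x) :=
      mul_nonneg (by positivity) (integral_nonneg fun x => pw_nonneg _ _)
    have e3 : 2 * p / (p + 1) * (∫ x, pw p (u t x)) =
      2 * p * (1 / (p + 1) * ∫ x, pw p (u t x)) := by ring
    rw [e1, e3]
    set q := 1 / (p + 1) * ∫ x, pw p (u t x)
    constructor
    · rw [e2]; nlinarith [mul_nonneg (by linarith : 0 ≤ p) a0]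
    · nlinarith
  have hXl : ∀ s t, s ≤ t → X t ≤ X s ∧ X s - (6 + 2 * p) * E * (t - s) ≤ X t := by
    intro s t hst
    have B := h.Bd hst
    have e : X t - X s = _ := B.X_id
    have l1 := slab_le (c := 0) hst B.imα (fun t _ => (hA t).2)
    have l2 := slab_ge (c := -((6 + 2 * p) * E)) hst B.imα (fun t _ => (hA t).1)
    rw [← e] at l1 l2
    constructor <;> linarith
  have hG : ∀ s t, s ≤ t → (E * X s - M * P s) + κ * (t - s) ≤ E * X t - M * P t := by
    intro s t hst
    have B := h.Bd hst
    have e1 : X t - X s = _ := B.X_id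
    have e2 : P t - P s = _ := B.P_id
    have i := (B.imα.const_mul E).sub (B.ieα.const_mul M)
    have l := slab_ge (c := κ) hst i (fun t _ => by
      simp only [Pi.sub_apply]
      have i1 : Integrable (fun x => mα p u t x) :=
        (((h.sch.dx.intsq1 t).const_mul 3).add ((h.intpw1 t).const_mul (2 * p / (p + 1)))).neg
      have i2 : Integrable (fun x => eα p u t x) := ((h.i_uxxnl t).const_mul 2).sub
        (((h.sch.dx.dx.intsq1 t).const_mul (3 / 2)).add ((h.intnl t).const_mul (1 / 2)))
      rw [integral_sub (i1.const_mul E) (i2.const_mul M), integral_const_mul, integral_const_mul]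
      have := h.tao hp3 t (by rw [massM]; exact hM)
      rw [massM, enE] at this
      refine le_trans ?_ this
      rw [hκ]
      have := hb t
      gcongr)
    simp only [Pi.sub_apply] at l
    rw [integral_sub (B.imα.const_mul E) (B.ieα.const_mul M), integral_const_mul,
      integral_const_mul, ← e1, ← e2] at l
    linarith
  set V0 := D + ((6 + 2 * p) * E) ^ 2 / M with hV0
  have hVb : ∀ s, ∀ t ∈ Set.Icc s (s + 1), V (X s / M) t ≤ V0 := by
    intro s t ht
    have e1 : V (X s / M) t = V 0 t - 2 * (X s / M) * X t + (X s / M) ^ 2 * M := by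
      have := h.V_expand (X s / M) t
      rw [massM] at this; exact this
    have e2 : V (x₀ t) t = V 0 t - 2 * (x₀ t) * X t + (x₀ t) ^ 2 * M := by
      have := h.V_expand (x₀ t) t
      rw [massM] at this; exact this
    have h3 : V (x₀ t) t ≤ D := hD t
    obtain ⟨l1, l2⟩ := hXl s t ht.1
    have h4 : (6 + 2 * p) * E * (t - s) ≤ (6 + 2 * p) * E := by
      have : 0 ≤ (6 + 2 * p) * E := by positivity
      nlinarith [ht.2]
    have h5 : (X s - X t) ^ 2 ≤ ((6 + 2 * p) * E) ^ 2 := by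
      apply pow_le_pow_left₀ <;> linarith
    have h6 : V (X s / M) t = V (x₀ t) t - M * (x₀ t - X t / M) ^ 2 + (X s - X t) ^ 2 / M := by
      rw [e1, e2]; field_simp; ring
    have h7 : (X s - X t) ^ 2 / M ≤ ((6 + 2 * p) * E) ^ 2 / M := by gcongr
    have h8 : 0 ≤ M * (x₀ t - X t / M) ^ 2 := by positivity
    rw [h6, hV0]; linarith
  set J := |4 * (3 - p) / (p + 1)| * (√(2 * KK p u 0) ^ (p - 1) * (M + V0)) with hJ
  have key : ∀ s, 0 ≤ s → 12 * ((E * X 0 - M * P 0) + κ * s) / M - J ≤ V0 := by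
    intro s hs
    have hst : s ≤ s + 1 := by linarith
    have B := h.Bd hst
    have e : V (X s / M) (s + 1) - V (X s / M) s = _ := B.V_id (X s / M)
    have V1 := hVb s (s + 1) ⟨hst, le_rfl⟩
    have V2 : 0 ≤ V (X s / M) s := integral_nonneg fun x => by positivity
    have iI : Integrable (fun q : ℝ × ℝ => 2 * (q.2 - X s / M) * mα p u q.1 q.2 +
        2 * mβ u q.1 q.2) (slab s (s + 1)) := by
      refine Integrable.add ?_ (B.imβ.const_mul 2)
      refine (B.wα.norm.const_mul (2 * (1 + |X s / M|))).mono'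
        (Continuous.aestronglyMeasurable (Continuous.mul (by fun_prop) h.cmα)) ?_
      filter_upwards with q
      rw [Real.norm_eq_abs, Real.norm_eq_abs, abs_mul, abs_mul, abs_mul, abs_two,
        abs_of_nonneg (by positivity : 0 ≤ 1 + |q.2|)]
      have := poly_bd1 (X s / M) q.2
      rw [pow_one] at this
      nlinarith [mul_le_mul_of_nonneg_right this (abs_nonneg (mα p u q.1 q.2))]
    have l := slab_ge (c := 12 * ((E * X 0 - M * P 0) + κ * s) / M - J) hst iI (fun t ht => by
      show _ ≤ ∫ x, (2 * (x - X s / M) * mα p u t x + 2 * mβ u t x)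
      rw [h.virial_slice, enE]
      have a1 := h.abs_moment (X s / M) t
      rw [massM] at a1
      have a2 := hVb s t ht
      have a3 : |4 * (3 - p) / (p + 1) * ∫ x, (x - X s / M) * pw p (u t x)| ≤ J := by
        rw [abs_mul, hJ]
        refine mul_le_mul_of_nonneg_left (a1.trans ?_) (abs_nonneg _)
        refine mul_le_mul_of_nonneg_left ?_ (Real.rpow_nonneg (Real.sqrt_nonneg _) _)
        exact add_le_add_right a2 M
      have a4 := (abs_le.1 a3).1
      have g1 := hG 0 t (hs.trans ht.1)
      have g2 := (hXl s t ht.1).1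
      have g3 : 12 * ((E * X 0 - M * P 0) + κ * s) / M ≤ -12 * (P t - X s / M * E) := by
        rw [div_le_iff₀ hM]
        have : -12 * (P t - X s / M * E) * M = 12 * (E * X s - M * P t) := by field_simp; ring
        rw [this]
        nlinarith [mul_le_mul_of_nonneg_left g2 E0, mul_le_mul_of_nonneg_left ht.1 κ0.le]
      have g3' : 12 * ((E * X 0 - M * P 0) + κ * s) / M ≤
        -12 * ((∫ x, x * en p u t x) - X s / M * E) := g3
      linarith)
    have e' : V (X s / M) (s + 1) - V (X s / M) s = ∫ q : ℝ × ℝ, (2 * (q.2 - X s / M) *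
      mα p u q.1 q.2 + 2 * mβ u q.1 q.2) ∂(slab s (s + 1)) := e
    rw [← e'] at l
    linarith
  -- choose s large
  set s := max 0 (((V0 + J + 1) * M / 12 - (E * X 0 - M * P 0)) / κ) with hs
  have k := key s (le_max_left _ _)
  have s2 : ((V0 + J + 1) * M / 12 - (E * X 0 - M * P 0)) / κ ≤ s := le_max_right _ _
  rw [div_le_iff₀ κ0] at s2
  have k2 : 12 * ((E * X 0 - M * P 0) + κ * s) / M ≤ V0 + J := by linarith
  rw [div_le_iff₀ hM] at k2
  nlinarith

theorem Sol.zero (h : Sol p u) (hp3 : √3 ≤ p) {x₀ : ℝ → ℝ} {C ε : ℝ} (hC : 0 < C) (hε : 0 < ε)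
    (hd : Decay u x₀ C ε) : u = 0 := by
  have hM0 : ∫ x, u 0 x ^ 2 = 0 := by
    by_contra hne
    exact h.contra hp3 hC hε hd
      (lt_of_le_of_ne (integral_nonneg fun x => sq_nonneg _) (Ne.symm hne))
  funext t x
  have e := h.mass_eq t
  rw [hM0, integral_eq_zero_iff_of_nonneg (fun x => sq_nonneg _) (h.sch.intsq1 t)] at e
  have e2 := Continuous.ae_eq_iff_eq volume ((h.sm.cn.slice t).pow 2) continuous_zero |>.1 e
  have := congrFun e2 x
  simpa using this

end

end GKdV

/-- **Nonexistence of soliton-like solutions.** For `p ≥ √3`, if `u` is a global Schwartz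
solution of the defocusing gKdV equation that is soliton-like with decay, i.e. there exist
`x : ℝ → ℝ`, `C > 0` and `ε > 0` with
`sup_t ∫_{|x−x(t)|>R} u²(t,x) dx ≤ C / R^{2+ε}` for every `R > 0`, then `u ≡ 0`. -/
theorem no_soliton_like_solution
    (p : ℝ) (hp : Real.sqrt 3 ≤ p)
    (u : ℝ → ℝ → ℝ)
    (hsmooth : ContDiff ℝ (⊤ : ℕ∞) (fun q : ℝ × ℝ => u q.1 q.2))
    (hschwartz : ∀ t : ℝ, ∃ f : SchwartzMap ℝ ℝ, ∀ x : ℝ, u t x = f x)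
    (hpde : ∀ t x : ℝ,
      deriv (fun s => u s x) t + iteratedDeriv 3 (fun y => u t y) x
        = deriv (fun y => |u t y| ^ (p - 1) * u t y) x)
    (x₀ : ℝ → ℝ) (C ε : ℝ) (hC : 0 < C) (hε : 0 < ε)
    (hdecay : ∀ R : ℝ, 0 < R → ∀ t : ℝ,
      (∫ x in {x : ℝ | R < |x - x₀ t|}, (u t x) ^ 2) ≤ C / R ^ (2 + ε)) :
    u = 0 := by
  have hp1 : 1 < p := by
    have : 1 < √3 := by rw [Real.lt_sqrt (by norm_num)]; norm_num
    linarith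
  have sm : GKdV.Sm u := hsmooth
  have sol : GKdV.Sol p u := by
    refine ⟨hp1, sm, hschwartz, fun t x => ?_⟩
    have h1 : deriv (fun y => |u t y| ^ (p - 1) * u t y) x =
        p * |u t x| ^ (p - 1) * GKdV.dx u t x :=
      (HasDerivAt.comp x (GKdV.hasDerivAt_nl hp1 (u t x)) (sm.hx t x)).deriv
    rw [← h1, ← hpde t x]
    congr 1
    rw [iteratedDeriv_succ, iteratedDeriv_succ, iteratedDeriv_one]
    rfl
  exact sol.zero hp hC hε hdecay
end

section
/- Let u : ℝ → ℝ be a Schwartz function and a ∈ ℝ. Then ∫_ℝ (x − a)² · 2 u(x) u'''(x) dx = 6 ∫_ℝ (x − a) (u'(x))² dx. -/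
open MeasureTheory Real

lemma aux_integrable (f g : SchwartzMap ℝ ℝ) (a : ℝ) (k : ℕ) :
    Integrable (fun x : ℝ => (x - a) ^ k * (f x * g x)) := by
  have h1 : Function.HasTemperateGrowth (fun x : ℝ => (x - a) ^ k * f x) := by
    have := f.hasTemperateGrowth
    fun_prop
  have h := (SchwartzMap.smulLeftCLM ℝ (fun x : ℝ => (x - a) ^ k * f x) g).integrable (μ := volume)
  refine h.congr (Filter.Eventually.of_forall fun x => ?_)
  simp only [SchwartzMap.smulLeftCLM_apply_apply h1, smul_eq_mul]
  ring

/-- Integration by parts identity for the linear (Airy) part: for a Schwartz function `u`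
and `a ∈ ℝ`, `∫ (x − a)² · 2 u u''' dx = 6 ∫ (x − a) (u')² dx`. -/
theorem weighted_ibp_third_derivative
    (u : SchwartzMap ℝ ℝ) (a : ℝ) :
    (∫ x : ℝ, (x - a) ^ 2 * (2 * u x * iteratedDeriv 3 (fun y => u y) x))
      = 6 * ∫ x : ℝ, (x - a) * (deriv (fun y => u y) x) ^ 2 := by
  obtain ⟨v, hv⟩ : ∃ v : SchwartzMap ℝ ℝ, (v : ℝ → ℝ) = deriv u :=
    ⟨SchwartzMap.derivCLM ℝ ℝ u, rfl⟩
  obtain ⟨w, hw⟩ : ∃ w : SchwartzMap ℝ ℝ, (w : ℝ → ℝ) = deriv v :=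
    ⟨SchwartzMap.derivCLM ℝ ℝ v, rfl⟩
  obtain ⟨z, hz⟩ : ∃ z : SchwartzMap ℝ ℝ, (z : ℝ → ℝ) = deriv w :=
    ⟨SchwartzMap.derivCLM ℝ ℝ w, rfl⟩
  have du : ∀ x, HasDerivAt u (v x) x := fun x => by rw [hv]; exact u.hasDerivAt x
  have dv : ∀ x, HasDerivAt v (w x) x := fun x => by rw [hw]; exact v.hasDerivAt x
  have dw : ∀ x, HasDerivAt w (z x) x := fun x => by rw [hz]; exact w.hasDerivAt x
  have e3 : iteratedDeriv 3 (fun y => u y) = z := by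
    rw [iteratedDeriv_succ, iteratedDeriv_succ, iteratedDeriv_one, hz, hw, hv]
  have e1 : deriv (fun y => u y) = v := hv.symm
  rw [e3, e1]
  have i1 : Integrable (fun x : ℝ => (x - a) ^ 2 * (2 * u x * z x)) := by
    refine ((aux_integrable u z a 2).const_mul 2).congr (Filter.Eventually.of_forall fun x => ?_)
    ring
  have i2 : Integrable (fun x : ℝ => 6 * ((x - a) * (v x) ^ 2)) := by
    refine ((aux_integrable v v a 1).const_mul 6).congr (Filter.Eventually.of_forall fun x => ?_)
    ring
  have iF := ((((aux_integrable u w a 2).const_mul 2).sub (aux_integrable v v a 2)).sub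
    ((aux_integrable u v a 1).const_mul 4)).add ((aux_integrable u u a 0).const_mul 2)
  have key := integral_eq_zero_of_hasDerivAt_of_integrable
    (f := fun x : ℝ => 2 * ((x - a) ^ 2 * (u x * w x)) - (x - a) ^ 2 * (v x * v x)
      - 4 * ((x - a) ^ 1 * (u x * v x)) + 2 * ((x - a) ^ 0 * (u x * u x)))
    (f' := fun x : ℝ => (x - a) ^ 2 * (2 * u x * z x) - 6 * ((x - a) * (v x) ^ 2))
    (fun x => by
      have t : HasDerivAt (fun x : ℝ => x - a) 1 x := (hasDerivAt_id x).sub_const a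
      have H := ((((t.pow 2).mul ((du x).mul (dw x))).const_mul 2).sub
        ((t.pow 2).mul ((dv x).mul (dv x)))).sub
        (((t.pow 1).mul ((du x).mul (dv x))).const_mul 4) |>.add
        (((t.pow 0).mul ((du x).mul (du x))).const_mul 2)
      refine H.congr_deriv ?_
      simp
      ring)
    (i1.sub i2) iF
  rw [integral_sub i1 i2, integral_const_mul] at key
  linarith
end
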